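/- arXiv:2604.14462 — 4 statements merged into one kernel-verified Lean document; each statement's English description precedes it below -/
import Mathlib

section
/- Let P be a finite subset of ℂ such that every point of P lies in the frontier of the convex hull (over ℝ) of P (i.e., P lies on the boundary of a convex polygon). If μ covers π in NC(P) (that is, π < μ and there is no η ∈ NC(P) with π < η < μ), then the number of blocks of μ equals the number of blocks of π minus 1. Consequently, the function ρ(π) = |P| − (number of blocks of π) is a rank function for NC(P), so NC(P) is graded. -/
open Finset

/-- A finpartition of a finite set of points in the plane is *noncrossing* if the
convex hulls (over `ℝ`) of its blocks are pairwise disjoint. -/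
def IsNoncrossing {P : Finset ℂ} (π : Finpartition P) : Prop :=
  (π.parts : Set (Finset ℂ)).Pairwise fun B₁ B₂ =>
    Disjoint (convexHull ℝ (B₁ : Set ℂ)) (convexHull ℝ (B₂ : Set ℂ))

/-- The poset `NC(P)` of noncrossing partitions of `P`, ordered by refinement:
`π ≤ μ` iff every block of `μ` is a union of blocks of `π`. -/
abbrev NC (P : Finset ℂ) : Type := {π : Finpartition P // IsNoncrossing π}

/-- The blocks of a noncrossing partition. -/
def NC.parts {P : Finset ℂ} (π : NC P) : Finset (Finset ℂ) := π.1.parts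

/-- Two points lie in a common block of a noncrossing partition. -/
def NC.SameBlock {P : Finset ℂ} (π : NC P) (a b : ℂ) : Prop :=
  ∃ B ∈ π.parts, a ∈ B ∧ b ∈ B

lemma ncaux_three {K : Set ℂ} (hK : Convex ℝ K) {x y z : ℂ} (hx : x ∈ K) (hy : y ∈ K)
    (hz : z ∈ K) {a b c : ℝ} (ha : 0 ≤ a) (hb : 0 ≤ b) (hc : 0 ≤ c) (h : a + b + c = 1) :
    a • x + b • y + c • z ∈ K := by
  have := hK.sum_mem (t := Finset.univ) (w := ![a, b, c]) (z := ![x, y, z])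
    (by intro i _; fin_cases i <;> simpa) (by simpa [Fin.sum_univ_three] using h)
    (by intro i _; fin_cases i <;> simpa)
  simpa [Fin.sum_univ_three] using this

lemma ncaux_expand (f : ℂ →L[ℝ] ℝ) (w : ℂ) : f w = w.re * f 1 + w.im * f Complex.I := by
  have h : w = w.re • (1 : ℂ) + w.im • Complex.I := by
    apply Complex.ext <;> simp
  have h2 := congrArg f h
  rw [map_add, map_smul, map_smul, smul_eq_mul, smul_eq_mul] at h2
  exact h2

lemma ncaux_decomp (f g : ℂ →L[ℝ] ℝ) (z u v : ℂ) :
    (f v * g u - f u * g v) • z = (g z * f v - f z * g v) • u + (f z * g u - g z * f u) • v := by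
  rw [ncaux_expand f z, ncaux_expand f u, ncaux_expand f v,
    ncaux_expand g z, ncaux_expand g u, ncaux_expand g v]
  apply Complex.ext <;> simp <;> ring

/-- Points on the near side of the line `uv` and in the positive quadrant at `q` lie in the
triangle; with weights. -/
lemma ncaux_tri {K : Set ℂ} (hK : Convex ℝ K) (f g : ℂ →L[ℝ] ℝ) {q u v z : ℂ}
    (hq : q ∈ K) (hu : u ∈ K) (hv : v ∈ K)
    (fu : f (u - q) < 0) (fv : 0 < f (v - q)) (gu : 0 < g (u - q)) (gv : g (v - q) ≤ 0)
    (hD : 0 < f (v - q) * g (u - q) - f (u - q) * g (v - q))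
    (fz : 0 < f (z - q)) (gz : 0 < g (z - q))
    (hL : f (z - q) * (g (u - q) - g (v - q)) + g (z - q) * (f (v - q) - f (u - q))
      ≤ f (v - q) * g (u - q) - f (u - q) * g (v - q)) : z ∈ K := by
  have key := ncaux_decomp f g (z - q) (u - q) (v - q)
  set D := f (v - q) * g (u - q) - f (u - q) * g (v - q) with hDdef
  set b := g (z - q) * f (v - q) - f (z - q) * g (v - q) with hb
  set c := f (z - q) * g (u - q) - g (z - q) * f (u - q) with hc
  have hb0 : 0 ≤ b := by nlinarith [mul_pos gz fv, mul_nonneg fz.le (neg_nonneg.2 gv)]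
  have hc0 : 0 ≤ c := by nlinarith [mul_pos fz gu, mul_pos gz (neg_pos.2 fu)]
  have hbc : b + c ≤ D := by rw [hb, hc]; linarith
  have hz : z = ((D - b - c) / D) • q + (b / D) • u + (c / D) • v := by
    have h2 : z - q = D⁻¹ • (b • (u - q) + c • (v - q)) := by
      rw [← key, smul_smul, inv_mul_cancel₀ hD.ne', one_smul]
    have h3 : (D - b - c) / D = 1 - b / D - c / D := by field_simp
    rw [h3]
    have h4 : z = q + D⁻¹ • (b • (u - q) + c • (v - q)) := by rw [← h2]; ring
    rw [h4]
    simp only [div_eq_inv_mul]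
    module
  rw [hz]
  refine ncaux_three hK hq hu hv ?_ ?_ ?_ ?_
  · exact div_nonneg (by linarith) hD.le
  · exact div_nonneg hb0 hD.le
  · exact div_nonneg hc0 hD.le
  · field_simp
    ring

lemma ncaux_line (f g : ℂ →L[ℝ] ℝ) {q u v z : ℂ}
    (fu : f (u - q) < 0) (fv : 0 < f (v - q)) (gu : 0 < g (u - q)) (gv : g (v - q) ≤ 0)
    (hD : 0 < f (v - q) * g (u - q) - f (u - q) * g (v - q))
    (fz : 0 < f (z - q)) (gz : 0 < g (z - q))
    (hL : f (z - q) * (g (u - q) - g (v - q)) + g (z - q) * (f (v - q) - f (u - q))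
      = f (v - q) * g (u - q) - f (u - q) * g (v - q)) : z ∈ openSegment ℝ u v := by
  have key := ncaux_decomp f g (z - q) (u - q) (v - q)
  set D := f (v - q) * g (u - q) - f (u - q) * g (v - q) with hDdef
  set b := g (z - q) * f (v - q) - f (z - q) * g (v - q) with hb
  set c := f (z - q) * g (u - q) - g (z - q) * f (u - q) with hc
  have hb0 : 0 < b := by nlinarith [mul_pos gz fv, mul_nonneg fz.le (neg_nonneg.2 gv)]
  have hc0 : 0 < c := by nlinarith [mul_pos fz gu, mul_pos gz (neg_pos.2 fu)]
  have hbc : b + c = D := by rw [hb, hc]; linarith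
  refine ⟨b / D, c / D, by positivity, by positivity, by rw [← add_div, hbc, div_self hD.ne'], ?_⟩
  have h2 : z - q = D⁻¹ • (b • (u - q) + c • (v - q)) := by
    rw [← key, smul_smul, inv_mul_cancel₀ hD.ne', one_smul]
  have h4 : z = q + D⁻¹ • (b • (u - q) + c • (v - q)) := by rw [← h2]; ring
  have h5 : (D⁻¹ * b) + (D⁻¹ * c) = 1 := by rw [← mul_add, hbc, inv_mul_cancel₀ hD.ne']
  rw [h4]
  simp only [div_eq_inv_mul]
  have h6 : (D⁻¹ * b) = 1 - D⁻¹ * c := by linarith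
  rw [smul_add, smul_smul, smul_smul, h6]
  module

lemma ncaux_gt {s : Set ℂ} (f : ℂ →L[ℝ] ℝ) {t : ℝ} (h : ∀ x ∈ s, t < f x) :
    ∀ x ∈ convexHull ℝ s, t < f x := fun _ hx =>
  convexHull_min (t := {w | t < f w}) h (convex_halfSpace_gt f.toLinearMap.isLinear t) hx

lemma ncaux_ge {s : Set ℂ} (f : ℂ →L[ℝ] ℝ) {t : ℝ} (h : ∀ x ∈ s, t ≤ f x) :
    ∀ x ∈ convexHull ℝ s, t ≤ f x := fun _ hx =>
  convexHull_min (t := {w | t ≤ f w}) h (convex_halfSpace_ge f.toLinearMap.isLinear t) hx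

lemma ncaux_lt {s : Set ℂ} (f : ℂ →L[ℝ] ℝ) {t : ℝ} (h : ∀ x ∈ s, f x < t) :
    ∀ x ∈ convexHull ℝ s, f x < t := fun _ hx =>
  convexHull_min (t := {w | f w < t}) h (convex_halfSpace_lt f.toLinearMap.isLinear t) hx

lemma ncaux_le {s : Set ℂ} (f : ℂ →L[ℝ] ℝ) {t : ℝ} (h : ∀ x ∈ s, f x ≤ t) :
    ∀ x ∈ convexHull ℝ s, f x ≤ t := fun _ hx =>
  convexHull_min (t := {w | f w ≤ t}) h (convex_halfSpace_le f.toLinearMap.isLinear t) hx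

lemma ncaux_sep (A B : Finset ℂ)
    (h : Disjoint (convexHull ℝ (A : Set ℂ)) (convexHull ℝ (B : Set ℂ))) :
    ∃ (f : ℂ →L[ℝ] ℝ) (t : ℝ), (∀ a ∈ A, t < f a) ∧ ∀ b ∈ B, f b < t := by
  obtain ⟨f, a, b, h1, h2, h3⟩ := geometric_hahn_banach_compact_closed
    (convex_convexHull ℝ (B : Set ℂ)) (B.finite_toSet.isCompact_convexHull ℝ)
    (convex_convexHull ℝ (A : Set ℂ)) (A.finite_toSet.isCompact_convexHull ℝ).isClosed h.symm
  exact ⟨f, b, fun x hx => h3 x (subset_convexHull ℝ _ hx),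
    fun x hx => (h1 x (subset_convexHull ℝ _ hx)).trans h2⟩

/-- A separable set. -/
def NcSep (M S : Finset ℂ) : Prop :=
  Disjoint (convexHull ℝ (S : Set ℂ)) (convexHull ℝ ((M \ S : Finset ℂ) : Set ℂ))

lemma ncaux_ext {M S : Finset ℂ} (hS : S ⊆ M) (hne : S.Nonempty) (h : NcSep M S) :
    ∃ v ∈ S, v ∈ Set.extremePoints ℝ (convexHull ℝ (M : Set ℂ)) := by
  obtain ⟨f, t, h1, h2⟩ := ncaux_sep _ _ h
  by_contra hcon
  push Not at hcon
  obtain ⟨s, hs⟩ := hne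
  have hK := closure_convexHull_extremePoints (M.finite_toSet.isCompact_convexHull ℝ)
    (convex_convexHull ℝ (M : Set ℂ))
  have hsK : s ∈ convexHull ℝ (M : Set ℂ) := subset_convexHull ℝ _ (hS hs)
  rw [← hK] at hsK
  have : closure (convexHull ℝ (Set.extremePoints ℝ (convexHull ℝ (M : Set ℂ)))) ⊆ {w | f w ≤ t} := by
    apply closure_minimal
    · apply ncaux_le
      intro x hx
      have hxM : x ∈ M := extremePoints_convexHull_subset hx
      have hxS : x ∉ S := fun h => hcon x h hx
      exact (h2 x (by simp [hxM, hxS])).le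
    · exact isClosed_le f.continuous continuous_const
  have h5 := this hsK
  exact absurd (h1 s hs) (not_lt.2 h5)

/-- Zero of an affine function on a segment. -/
lemma ncaux_zero {K : Set ℂ} (hK : Convex ℝ K) (f : ℂ →L[ℝ] ℝ) {t : ℝ} {x y : ℂ}
    (hx : x ∈ K) (hy : y ∈ K) (fx : f x < t) (fy : t < f y) :
    ∃ a b : ℝ, 0 < a ∧ 0 < b ∧ a + b = 1 ∧ a • x + b • y ∈ K ∧ f (a • x + b • y) = t := by
  have hd : 0 < f y - f x := by linarith
  have ha : 0 < (f y - t) / (f y - f x) := div_pos (by linarith) hd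
  have hb : 0 < (t - f x) / (f y - f x) := div_pos (by linarith) hd
  have hab : (f y - t) / (f y - f x) + (t - f x) / (f y - f x) = 1 := by
    field_simp; ring
  refine ⟨_, _, ha, hb, hab, hK hx hy ha.le hb.le hab, ?_⟩
  simp only [map_add, map_smul, smul_eq_mul]
  field_simp
  ring

lemma ncaux_cross {M : Finset ℂ} (hM : ∀ p ∈ M, p ∉ interior (convexHull ℝ (M : Set ℂ)))
    (f g : ℂ →L[ℝ] ℝ) {q u v x : ℂ}
    (hq : q ∈ convexHull ℝ (M : Set ℂ)) (hu : u ∈ convexHull ℝ (M : Set ℂ))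
    (hv : v ∈ convexHull ℝ (M : Set ℂ)) (S : Finset ℂ)
    (hS : ∀ y ∈ S, y ∈ M ∧ f q < f y ∧ g q < g y)
    (hx : x ∈ segment ℝ u v) (hxS : x ∈ convexHull ℝ (S : Set ℂ))
    (fu : f u < f q) (gv : g v ≤ g q) :
    ∀ y ∈ S, y ∉ Set.extremePoints ℝ (convexHull ℝ (M : Set ℂ)) := by
  set K := convexHull ℝ (M : Set ℂ) with hKdef
  have hK : Convex ℝ K := convex_convexHull ℝ _
  have fx : f q < f x := ncaux_gt f (fun y hy => (hS y hy).2.1) x hxS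
  have gx : g q < g x := ncaux_gt g (fun y hy => (hS y hy).2.2) x hxS
  obtain ⟨a, b, ha, hb, hab, rfl⟩ := hx
  simp only [map_add, map_smul, smul_eq_mul] at fx gx
  have ha' : a = 1 - b := by linarith
  have fu' : f (u - q) < 0 := by rw [map_sub]; linarith
  have gv' : g (v - q) ≤ 0 := by rw [map_sub]; linarith
  have fx' : 0 < a * f (u - q) + b * f (v - q) := by
    have e : a * f (u - q) + b * f (v - q) = a * f u + b * f v - (a + b) * f q := by
      rw [map_sub, map_sub]; ring
    rw [e, hab, one_mul]; linarith
  have gx' : 0 < a * g (u - q) + b * g (v - q) := by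
    have e : a * g (u - q) + b * g (v - q) = a * g u + b * g v - (a + b) * g q := by
      rw [map_sub, map_sub]; ring
    rw [e, hab, one_mul]; linarith
  have hb0 : 0 < b := by
    rcases hb.eq_or_lt with h | h
    · rw [← h] at fx'; nlinarith
    · exact h
  have ha0 : 0 < a := by
    rcases ha.eq_or_lt with h | h
    · rw [← h] at gx'; nlinarith
    · exact h
  have fv' : 0 < f (v - q) := by
    by_contra hc
    push Not at hc
    nlinarith
  have gu' : 0 < g (u - q) := by
    by_contra hc
    push Not at hc
    nlinarith
  have hD : 0 < f (v - q) * g (u - q) - f (u - q) * g (v - q) := by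
    have h1 : a * (-f (u - q)) < b * f (v - q) := by linarith
    have h2 : b * (-g (v - q)) < a * g (u - q) := by linarith
    have h3 : (a * (-f (u - q))) * (b * (-g (v - q))) < (b * f (v - q)) * (a * g (u - q)) :=
      mul_lt_mul'' h1 h2 (mul_nonneg ha (by linarith)) (mul_nonneg hb (by linarith))
    have h4 : 0 < (a * b) * (f (v - q) * g (u - q) - f (u - q) * g (v - q)) := by nlinarith
    exact pos_of_mul_pos_right h4 (by positivity)
  -- the line functional
  set D := f (v - q) * g (u - q) - f (u - q) * g (v - q) with hDdef
  let l : ℂ →L[ℝ] ℝ := (g (u - q) - g (v - q)) • f + (f (v - q) - f (u - q)) • g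
  have hl : ∀ z, l (z - q) = f (z - q) * (g (u - q) - g (v - q))
      + g (z - q) * (f (v - q) - f (u - q)) := by
    intro z; simp only [l, add_apply, smul_apply,
      smul_eq_mul]; ring
  have hl' : ∀ z, l z = l q + l (z - q) := by intro z; rw [map_sub]; ring
  have lx : l (a • u + b • v) = l q + D := by
    rw [map_add, map_smul, map_smul, hl' u, hl' v, hl u, hl v, ha', hDdef]
    simp only [smul_eq_mul]; ring
  let U : Set ℂ := {z | f q < f z} ∩ {z | g q < g z} ∩ {z | l z < l q + D}
  have hUo : IsOpen U := ((isOpen_lt continuous_const f.continuous).inter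
    (isOpen_lt continuous_const g.continuous)).inter (isOpen_lt l.continuous continuous_const)
  have hUK : U ⊆ K := by
    rintro z ⟨⟨h1, h2⟩, h3⟩
    simp only [Set.mem_ofPred_eq] at h1 h2 h3
    refine ncaux_tri hK f g hq hu hv fu' fv' gu' gv' hD (by rw [map_sub]; linarith)
      (by rw [map_sub]; linarith) ?_
    rw [← hl z]; rw [hl' z] at h3; linarith
  have hUi : U ⊆ interior K := interior_maximal hUK hUo
  have hge : ∀ y ∈ S, l q + D ≤ l y := by
    intro y hy
    by_contra hc
    push Not at hc
    exact hM y (hS y hy).1 (hUi ⟨⟨(hS y hy).2.1, (hS y hy).2.2⟩, hc⟩)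
  obtain ⟨y, hyS, hy⟩ : ∃ y ∈ S, l y = l q + D := by
    by_contra hc
    push Not at hc
    have := ncaux_gt l (s := (S : Set ℂ)) (t := l q + D)
      (fun y hy => lt_of_le_of_ne (hge y hy) (hc y hy).symm) _ hxS
    linarith
  have hle : ∀ p ∈ M, l p ≤ l q + D := by
    intro p hp
    by_contra hc
    push Not at hc
    have hpK : p ∈ K := subset_convexHull ℝ _ hp
    -- move slightly away from `p`
    have hcont : Continuous fun e : ℝ => y + e • (y - p) := by fun_prop
    have hV : IsOpen ({z : ℂ | f q < f z} ∩ {z | g q < g z}) :=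
      (isOpen_lt continuous_const f.continuous).inter (isOpen_lt continuous_const g.continuous)
    have hmem : (fun e : ℝ => y + e • (y - p)) 0 ∈ ({z : ℂ | f q < f z} ∩ {z | g q < g z}) := by
      simpa using (hS y hyS).2
    have hn := hcont.continuousAt.preimage_mem_nhds (hV.mem_nhds hmem)
    obtain ⟨ε, hε, hball⟩ := Metric.mem_nhds_iff.1 hn
    have h1 : ε / 2 ∈ Metric.ball (0 : ℝ) ε := by
      rw [Metric.mem_ball, dist_zero_right, Real.norm_of_nonneg (by positivity)]; linarith
    have h2 := hball h1
    have hw : y + (ε / 2) • (y - p) ∈ interior K := by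
      apply hUi
      refine ⟨h2, ?_⟩
      simp only [Set.mem_ofPred_eq, map_add, map_smul, map_sub, smul_eq_mul]
      nlinarith
    apply hM y (hS y hyS).1
    apply hK.openSegment_interior_self_subset_interior hw hpK
    refine ⟨1 / (1 + ε / 2), (ε / 2) / (1 + ε / 2), by positivity, by positivity, by field_simp, ?_⟩
    have h5 : (1 / (1 + ε / 2)) + (ε / 2) / (1 + ε / 2) = 1 := by field_simp
    have h6 : (1 / (1 + ε / 2)) * (ε / 2) = (ε / 2) / (1 + ε / 2) := by field_simp
    have h7 : (1 / (1 + ε / 2)) = 1 - (ε / 2) / (1 + ε / 2) := by linarith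
    rw [smul_add, smul_smul, h6, h7]
    module
  intro z hz hext
  have hzl : l z = l q + D := le_antisymm (hle z (hS z hz).1) (hge z hz)
  have hseg : z ∈ openSegment ℝ u v := by
    refine ncaux_line f g fu' fv' gu' gv' hD (by rw [map_sub]; linarith [(hS z hz).2.1])
      (by rw [map_sub]; linarith [(hS z hz).2.2]) ?_
    rw [← hl z]; rw [hl' z] at hzl; linarith
  have := (mem_extremePoints.1 hext).2 u hu v hv hseg
  rw [this.1, map_sub] at fu'
  linarith [(hS z hz).2.1]

/-- The trichotomy used in the minimality argument. -/
lemma ncaux_key {M : Finset ℂ} (hM : ∀ p ∈ M, p ∉ interior (convexHull ℝ (M : Set ℂ)))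
    {S A C : Finset ℂ} (hSM : S ⊆ M) (hS : NcSep M S) (hAS : A ⊆ S) (hCM : C ⊆ M)
    (hA : A.Nonempty)
    (hAC : Disjoint (convexHull ℝ (A : Set ℂ)) (convexHull ℝ (C : Set ℂ)))
    {c : ℂ} (hc : c ∈ C) (hcS : c ∈ S) :
    (∃ S' ⊆ S, NcSep M S' ∧ A ⊆ S' ∧ c ∉ S') ∨
    (∃ S' ⊆ S, NcSep M S' ∧ C ⊆ S' ∧ Disjoint A S') ∨
    (∀ y ∈ A, y ∉ Set.extremePoints ℝ (convexHull ℝ (M : Set ℂ))) := by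
  classical
  obtain ⟨f, t, hf1, hf2⟩ := ncaux_sep _ _ hS
  obtain ⟨g, r, hg1, hg2⟩ := ncaux_sep _ _ hAC
  have hK : Convex ℝ (convexHull ℝ (M : Set ℂ)) := convex_convexHull ℝ _
  have hMK : ∀ z ∈ M, z ∈ convexHull ℝ (M : Set ℂ) := fun z hz => subset_convexHull ℝ _ hz
  have hf2' : ∀ z ∈ M, z ∉ S → f z < t := fun z hz hzS => hf2 z (by simp [hz, hzS])
  by_cases hex : ∃ q ∈ convexHull ℝ (M : Set ℂ), f q = t ∧ g q = r
  · obtain ⟨q, hq, rfl, rfl⟩ := hex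
    by_cases hsep : NcSep M (S.filter fun z => g q < g z)
    · left
      refine ⟨_, Finset.filter_subset _ _, hsep, ?_, ?_⟩
      · intro z hz; simp [hAS hz, hg1 z hz]
      · simp [(hg2 c hc).le]
    · right; right
      unfold NcSep at hsep
      rw [Set.not_disjoint_iff] at hsep
      obtain ⟨x, hx1, hx2⟩ := hsep
      have hS' : ∀ y ∈ S.filter (fun z => g q < g z), y ∈ M ∧ f q < f y ∧ g q < g y := by
        intro y hy
        rw [Finset.mem_filter] at hy
        exact ⟨hSM hy.1, hf1 y hy.1, hy.2⟩
      have fx : f q < f x := ncaux_gt f (fun y hy => (hS' y hy).2.1) x hx1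
      have gx : g q < g x := ncaux_gt g (fun y hy => (hS' y hy).2.2) x hx1
      have hun : ((M \ S.filter fun z => g q < g z : Finset ℂ) : Set ℂ)
          = ((M \ S : Finset ℂ) : Set ℂ) ∪ ((M.filter fun z => g z ≤ g q : Finset ℂ) : Set ℂ) := by
        ext z
        simp only [Finset.coe_sdiff, Finset.coe_filter, Set.mem_sdiff, Set.mem_union,
          Set.mem_ofPred_eq, Finset.mem_coe, not_and, not_lt]
        constructor
        · rintro ⟨h1, h2⟩
          by_cases h3 : z ∈ S
          · exact Or.inr ⟨h1, h2 h3⟩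
          · exact Or.inl ⟨h1, h3⟩
        · rintro (⟨h1, h2⟩ | ⟨h1, h2⟩)
          · exact ⟨h1, fun h => absurd h h2⟩
          · exact ⟨h1, fun _ => h2⟩
      have hL : ∀ z ∈ convexHull ℝ ((M \ S : Finset ℂ) : Set ℂ), f z < f q := ncaux_lt f hf2
      have hR : ∀ z ∈ convexHull ℝ ((M.filter fun z => g z ≤ g q : Finset ℂ) : Set ℂ),
          g z ≤ g q := ncaux_le g (fun z hz => (Finset.mem_filter.1 hz).2)
      rw [hun] at hx2
      rcases Set.eq_empty_or_nonempty ((M \ S : Finset ℂ) : Set ℂ) with he | hne1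
      · rw [he, Set.empty_union] at hx2
        exact absurd (hR x hx2) (not_le.2 gx)
      have hne2 : ((M.filter fun z => g z ≤ g q : Finset ℂ) : Set ℂ).Nonempty :=
        ⟨c, by simp [hCM hc, (hg2 c hc).le]⟩
      rw [convexHull_union hne1 hne2, mem_convexJoin] at hx2
      obtain ⟨u, hu, v, hv, hx⟩ := hx2
      have := ncaux_cross hM f g hq (convexHull_mono (by simp) hu)
        (convexHull_mono (Finset.coe_subset.2 (Finset.filter_subset _ _)) hv) _ hS' hx hx1 (hL u hu) (hR v hv)
      intro y hy
      exact this y (by simp [hAS hy, hg1 y hy])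
  · push Not at hex
    by_cases hal : ∀ z ∈ convexHull ℝ (M : Set ℂ), f z = t → r < g z
    · right; left
      refine ⟨M.filter fun z => g z < r, ?_, ?_, ?_, ?_⟩
      · intro z hz
        rw [Finset.mem_filter] at hz
        by_contra hzS
        obtain ⟨a, b, ha, hb, hab, hk, ht⟩ := ncaux_zero hK f (hMK z hz.1) (hMK c (hCM hc))
          (hf2' z hz.1 hzS) (hf1 c hcS)
        have h1 := hal _ hk ht
        simp only [map_add, map_smul, smul_eq_mul] at h1
        have h2 := mul_lt_mul_of_pos_left hz.2 ha
        have h3 := mul_lt_mul_of_pos_left (hg2 c hc) hb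
        have h4 : a * r + b * r = r := by rw [← add_mul, hab, one_mul]
        linarith
      · refine Set.disjoint_left.2 fun x hx1 hx2 => ?_
        have h1 := ncaux_lt g (t := r) (fun z hz => (Finset.mem_filter.1 hz).2) x hx1
        have h2 := ncaux_ge g (t := r) (fun z hz => by
          simp only [Finset.coe_sdiff, Finset.coe_filter, Set.mem_sdiff, Set.mem_ofPred_eq,
            Finset.mem_coe, not_and, not_lt] at hz
          exact hz.2 hz.1) x hx2
        linarith
      · intro z hz; simp [hCM hz, hg2 z hz]
      · rw [Finset.disjoint_left]
        intro z hz; simp [(hg1 z hz).le]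
    · left
      push Not at hal
      obtain ⟨z1, hz1, hfz1, hgz1⟩ := hal
      have hgz1' : g z1 < r := lt_of_le_of_ne hgz1 (hex z1 hz1 hfz1)
      have hbe : ∀ z ∈ convexHull ℝ (M : Set ℂ), f z = t → g z < r := by
        intro z hz hfz
        by_contra hcon
        push Not at hcon
        have hlt : r < g z := lt_of_le_of_ne hcon (hex z hz hfz).symm
        obtain ⟨a, b, ha, hb, hab, hk, ht⟩ := ncaux_zero hK g hz1 hz hgz1' hlt
        refine hex _ hk ?_ ht
        simp only [map_add, map_smul, smul_eq_mul, hfz, hfz1]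
        rw [← add_mul, hab, one_mul]
      refine ⟨M.filter fun z => r < g z, ?_, ?_, ?_, ?_⟩
      · intro z hz
        rw [Finset.mem_filter] at hz
        by_contra hzS
        obtain ⟨y, hy⟩ := hA
        obtain ⟨a, b, ha, hb, hab, hk, ht⟩ := ncaux_zero hK f (hMK z hz.1) (hMK y (hSM (hAS hy)))
          (hf2' z hz.1 hzS) (hf1 y (hAS hy))
        have h1 := hbe _ hk ht
        simp only [map_add, map_smul, smul_eq_mul] at h1
        have h2 := mul_lt_mul_of_pos_left hz.2 ha
        have h3 := mul_lt_mul_of_pos_left (hg1 y hy) hb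
        have h4 : a * r + b * r = r := by rw [← add_mul, hab, one_mul]
        linarith
      · refine Set.disjoint_left.2 fun x hx1 hx2 => ?_
        have h1 := ncaux_gt g (t := r) (fun z hz => (Finset.mem_filter.1 hz).2) x hx1
        have h2 := ncaux_le g (t := r) (fun z hz => by
          simp only [Finset.coe_sdiff, Finset.coe_filter, Set.mem_sdiff, Set.mem_ofPred_eq,
            Finset.mem_coe, not_and, not_lt] at hz
          exact hz.2 hz.1) x hx2
        linarith
      · intro z hz; simp [hSM (hAS hz), hg1 z hz]
      · simp [(hg2 c hc).le]

/-- Some block can be separated from the rest. -/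
lemma ncaux_leaf {M : Finset ℂ} (hM : ∀ p ∈ M, p ∉ interior (convexHull ℝ (M : Set ℂ)))
    (hne : M.Nonempty) (𝒜 : Finset (Finset ℂ)) (hcov : ∀ x ∈ M, ∃ A ∈ 𝒜, x ∈ A)
    (hsub : ∀ A ∈ 𝒜, A ⊆ M)
    (hdis : ∀ A ∈ 𝒜, ∀ B ∈ 𝒜, A ≠ B →
      Disjoint (convexHull ℝ (A : Set ℂ)) (convexHull ℝ (B : Set ℂ))) :
    ∃ A ∈ 𝒜, NcSep M A := by
  classical
  set E := Set.extremePoints ℝ (convexHull ℝ (M : Set ℂ)) with hE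
  have hMsep : NcSep M M := by simp [NcSep]
  let 𝒮 := M.powerset.filter fun S => NcSep M S ∧ ∃ A ∈ 𝒜, A ⊆ S ∧ ∃ v ∈ A, v ∈ E
  have h𝒮 : 𝒮.Nonempty := by
    obtain ⟨v, hv, hvE⟩ := ncaux_ext (Finset.Subset.refl M) hne hMsep
    obtain ⟨A, hA, hvA⟩ := hcov v hv
    exact ⟨M, by simp only [𝒮, Finset.mem_filter, Finset.mem_powerset]
                 exact ⟨Finset.Subset.refl M, hMsep, A, hA, hsub A hA, v, hvA, hvE⟩⟩
  obtain ⟨S, hS, hmin⟩ := Finset.exists_min_image 𝒮 Finset.card h𝒮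
  simp only [𝒮, Finset.mem_filter, Finset.mem_powerset] at hS hmin
  obtain ⟨hSM, hSsep, A, hA, hAS, v, hvA, hvE⟩ := hS
  have hmin' : ∀ S' ⊆ S, NcSep M S' → ∀ B ∈ 𝒜, B ⊆ S' → (∃ w ∈ B, w ∈ E) → S' = S := by
    intro S' h1 h2 B hB h3 h4
    exact Finset.eq_of_subset_of_card_le h1 (hmin S' ⟨h1.trans hSM, h2, B, hB, h3, h4⟩)
  have hstep : ∀ c ∈ S, c ∉ A → ∀ C ∈ 𝒜, c ∈ C →
      ∃ S' ⊆ S, NcSep M S' ∧ C ⊆ S' ∧ Disjoint A S' := by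
    intro c hcS hcA C hC hcC
    have hne : A ≠ C := by rintro rfl; exact hcA hcC
    rcases ncaux_key hM hSM hSsep hAS (hsub C hC) ⟨v, hvA⟩ (hdis A hA C hC hne) hcC hcS with
      ⟨S', h1, h2, h3, h4⟩ | h | h
    · have := hmin' S' h1 h2 A hA h3 ⟨v, hvA, hvE⟩
      exact absurd hcS (this ▸ h4)
    · exact h
    · exact absurd hvE (h v hvA)
  have hnoext : ∀ c ∈ S, c ∉ A → c ∉ E := by
    intro c hcS hcA hcE
    obtain ⟨C, hC, hcC⟩ := hcov c (hSM hcS)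
    obtain ⟨S', h1, h2, h3, h4⟩ := hstep c hcS hcA C hC hcC
    have := hmin' S' h1 h2 C hC h3 ⟨c, hcC, hcE⟩
    rw [this] at h4
    exact Finset.disjoint_left.1 h4 hvA (hAS hvA)
  have hAeq : A = S := by
    refine Finset.Subset.antisymm hAS fun c hcS => ?_
    by_contra hcA
    obtain ⟨C, hC, hcC⟩ := hcov c (hSM hcS)
    obtain ⟨S', h1, h2, h3, h4⟩ := hstep c hcS hcA C hC hcC
    obtain ⟨w, hw, hwE⟩ := ncaux_ext (h1.trans hSM) ⟨c, h3 hcC⟩ h2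
    exact hnoext w (h1 hw) (fun h => Finset.disjoint_left.1 h4 h hw) hwE
  exact ⟨A, hA, hAeq ▸ hSsep⟩

/-- If every point of `P` lies on the boundary of a convex polygon (equivalently, on the
frontier of the convex hull of `P`), then whenever `μ` covers `π` in `NC(P)`, the number
of blocks of `μ` is one less than the number of blocks of `π`; consequently
`ρ(π) = |P| - #blocks(π)` is a rank function and `NC(P)` is graded. -/
theorem nc_covBy_card_parts (P : Finset ℂ)
    (hP : ∀ p ∈ P, p ∈ frontier (convexHull ℝ (P : Set ℂ)))
    (π μ : NC P) (h : π ⋖ μ) :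
    π.parts.card = μ.parts.card + 1 := by
  classical
  obtain ⟨π, hπ⟩ := π
  obtain ⟨μ, hμ⟩ := μ
  have hle : π ≤ μ := h.1.le
  have hnle : ¬ μ ≤ π := fun hh => h.1.not_ge hh
  change π.parts.card = μ.parts.card + 1
  obtain ⟨M, hMμ, hMπ⟩ : ∃ M ∈ μ.parts, M ∉ π.parts := by
    by_contra hc
    push Not at hc
    exact hnle fun b hb => ⟨b, hc b hb, le_rfl⟩
  have hMP : M ⊆ P := μ.le hMμ
  have hMne : M.Nonempty := μ.nonempty_of_mem_parts hMμ
  have hMint : ∀ p ∈ M, p ∉ interior (convexHull ℝ (M : Set ℂ)) := by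
    intro p hp hi
    exact (hP p (hMP hp)).2 (interior_mono (convexHull_mono (Finset.coe_subset.2 hMP)) hi)
  -- blocks of `π` meeting `M` are contained in `M`
  have hblock : ∀ B ∈ π.parts, ∀ N ∈ μ.parts, ∀ x ∈ B, x ∈ N → B ⊆ N := by
    intro B hB N hN x hxB hxN
    obtain ⟨N', hN', hBN'⟩ := hle hB
    have := μ.eq_of_mem_parts hN' hN (hBN' hxB) hxN
    exact this ▸ hBN'
  obtain ⟨A, hA, hsep⟩ := ncaux_leaf hMint hMne (π.parts.filter fun B => B ⊆ M)
    (by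
      intro x hx
      obtain ⟨B, hB, hxB⟩ := π.exists_mem (hMP hx)
      exact ⟨B, by simp [hB, hblock B hB M hMμ x hxB hx], hxB⟩)
    (by intro B hB; exact (Finset.mem_filter.1 hB).2)
    (by
      intro B hB C hC hne
      exact hπ (Finset.mem_filter.1 hB).1 (Finset.mem_filter.1 hC).1 hne)
  obtain ⟨hAπ, hAM⟩ := Finset.mem_filter.1 hA
  have hAne : A.Nonempty := π.nonempty_of_mem_parts hAπ
  have hAneM : A ≠ M := fun e => hMπ (e ▸ hAπ)
  have hRne : (M \ A).Nonempty := by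
    rw [Finset.sdiff_nonempty]
    exact fun hh => hAneM (Finset.Subset.antisymm hAM hh)
  have hRM : M \ A ⊆ M := Finset.sdiff_subset
  have hsepd : Disjoint A (M \ A) := Finset.disjoint_sdiff
  have hARne : A ≠ M \ A := by
    intro e
    obtain ⟨a, ha⟩ := hAne
    exact Finset.disjoint_left.1 hsepd ha (e ▸ ha)
  have hdis : ∀ N ∈ μ.parts, N ≠ M → Disjoint N M := fun N hN hne => μ.disjoint hN hMμ hne
  have hnot : ∀ B : Finset ℂ, B.Nonempty → B ⊆ M → B ∉ μ.parts.erase M := by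
    intro B hBne hBM hB
    rw [Finset.mem_erase] at hB
    obtain ⟨b, hb⟩ := hBne
    exact Finset.disjoint_left.1 (hdis B hB.2 hB.1) hb (hBM hb)
  let parts : Finset (Finset ℂ) := insert A (insert (M \ A) (μ.parts.erase M))
  have hmem : ∀ B, B ∈ parts ↔ B = A ∨ B = M \ A ∨ (B ≠ M ∧ B ∈ μ.parts) := by
    intro B; simp only [parts, Finset.mem_insert, Finset.mem_erase]
  have hcard : parts.card = μ.parts.card + 1 := by
    have h1 : M \ A ∉ μ.parts.erase M := hnot _ hRne hRM
    have h2 : A ∉ insert (M \ A) (μ.parts.erase M) := by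
      rw [Finset.mem_insert, not_or]
      exact ⟨hARne, hnot _ hAne hAM⟩
    have h3 := Finset.card_erase_add_one hMμ
    rw [Finset.card_insert_of_notMem h2, Finset.card_insert_of_notMem h1]
    omega
  have hcross : (parts : Set (Finset ℂ)).Pairwise fun B₁ B₂ =>
      Disjoint (convexHull ℝ (B₁ : Set ℂ)) (convexHull ℝ (B₂ : Set ℂ)) := by
    have hout : ∀ B ⊆ M, ∀ N ∈ μ.parts, N ≠ M →
        Disjoint (convexHull ℝ (B : Set ℂ)) (convexHull ℝ (N : Set ℂ)) := by
      intro B hB N hN hne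
      exact (hμ hMμ hN hne.symm).mono_left (convexHull_mono (Finset.coe_subset.2 hB))
    intro B hB C hC hne
    rw [Finset.mem_coe, hmem] at hB hC
    rcases hB with rfl | rfl | ⟨hB1, hB2⟩ <;> rcases hC with rfl | rfl | ⟨hC1, hC2⟩
    · exact absurd rfl hne
    · exact hsep
    · exact hout _ hAM _ hC2 hC1
    · exact hsep.symm
    · exact absurd rfl hne
    · exact hout _ hRM _ hC2 hC1
    · exact (hout _ hAM _ hB2 hB1).symm
    · exact (hout _ hRM _ hB2 hB1).symm
    · exact hμ hB2 hC2 hne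
  let η : Finpartition P :=
    { parts := parts
      supIndep := by
        rw [Finset.supIndep_iff_pairwiseDisjoint]
        intro B hB C hC hne
        have hd := hcross hB hC hne
        change Disjoint B C
        rw [← Finset.disjoint_coe]
        exact hd.mono (subset_convexHull ℝ _) (subset_convexHull ℝ _)
      sup_parts := by
        apply le_antisymm
        · apply Finset.sup_le
          intro B hB
          rw [hmem] at hB
          rcases hB with rfl | rfl | ⟨_, hB⟩
          · exact hAM.trans hMP
          · exact hRM.trans hMP
          · exact μ.le hB
        · intro x hx
          obtain ⟨N, hN, hxN⟩ := μ.exists_mem hx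
          rw [Finset.mem_sup]
          by_cases hNM : N = M
          · subst hNM
            by_cases hxA : x ∈ A
            · exact ⟨A, (hmem _).2 (Or.inl rfl), hxA⟩
            · exact ⟨N \ A, (hmem _).2 (Or.inr (Or.inl rfl)), Finset.mem_sdiff.2 ⟨hxN, hxA⟩⟩
          · exact ⟨N, (hmem _).2 (Or.inr (Or.inr ⟨hNM, hN⟩)), hxN⟩
      bot_notMem := by
        intro hb
        rw [hmem] at hb
        rcases hb with hb | hb | ⟨_, hb⟩
        · exact hAne.ne_empty hb.symm
        · exact hRne.ne_empty hb.symm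
        · exact μ.bot_notMem hb }
  have hπη : π ≤ η := by
    intro B hB
    obtain ⟨N, hN, hBN⟩ := hle hB
    by_cases hNM : N = M
    · subst hNM
      by_cases hBA : B = A
      · exact ⟨A, (hmem _).2 (Or.inl rfl), hBA.le⟩
      · refine ⟨N \ A, (hmem _).2 (Or.inr (Or.inl rfl)), fun x hx => ?_⟩
        exact Finset.mem_sdiff.2 ⟨hBN hx, fun hxA => hBA (π.eq_of_mem_parts hB hAπ hx hxA)⟩
    · exact ⟨N, (hmem _).2 (Or.inr (Or.inr ⟨hNM, hN⟩)), hBN⟩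
  have hημ : η ≤ μ := by
    intro B hB
    rcases (hmem B).1 hB with rfl | rfl | ⟨_, hB⟩
    · exact ⟨M, hMμ, hAM⟩
    · exact ⟨M, hMμ, hRM⟩
    · exact ⟨B, hB, le_rfl⟩
  have hne : η ≠ μ := by
    intro e
    have : parts = μ.parts := congrArg Finpartition.parts e
    rw [this] at hcard
    omega
  have heq : π = η := by
    by_contra hc
    have h1 : (⟨π, hπ⟩ : NC P) < ⟨η, hcross⟩ := lt_of_le_of_ne hπη fun e => hc (congrArg Subtype.val e)
    have h2 : (⟨η, hcross⟩ : NC P) < ⟨μ, hμ⟩ := lt_of_le_of_ne hημ fun e => hne (congrArg Subtype.val e)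
    exact h.2 h1 h2
  rw [heq]
  exact hcard
end

section
/- Let n ≥ 2 and let T_n = {1, 2, …, n} ∪ {i} ⊆ ℂ, writing x_k = k for 1 ≤ k ≤ n and y = i. Let A be the subposet of NC(T_n) consisting of all noncrossing partitions in which x_n is either a singleton block or lies in the same block as x_{n−1}, and let B be the subposet consisting of all noncrossing partitions in which {x_n, y} is a block. Then: (1) A is order-isomorphic to the direct product of NC(T_{n−1}) with a two-element chain; (2) B is order-isomorphic to the Boolean lattice of all subsets of an (n−2)-element set ordered by inclusion; and (3) NC(T_n) is the disjoint union of A and B. -/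
open Finset

/-- The configuration `T_n = {1, …, n} ∪ {i} ⊆ ℂ`: the points `x_k = k` for
`1 ≤ k ≤ n` together with `y = i`. -/
noncomputable def Tconfig (n : ℕ) : Finset ℂ :=
  ((Finset.Icc 1 n).image fun k : ℕ => (k : ℂ)) ∪ {Complex.I}

/-- `x_n` is a singleton block or lies in the same block as `x_{n-1}`. -/
def TcondA (n : ℕ) (μ : NC (Tconfig n)) : Prop :=
  ({((n : ℕ) : ℂ)} : Finset ℂ) ∈ μ.parts ∨ μ.SameBlock (((n - 1 : ℕ) : ℂ)) ((n : ℂ))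

/-- `{x_n, y}` is a block. -/
def TcondB (n : ℕ) (μ : NC (Tconfig n)) : Prop :=
  ({((n : ℕ) : ℂ), Complex.I} : Finset ℂ) ∈ μ.parts


/-- The labelling of the points: `0 ↦ i`, `k ↦ k` for `k ≥ 1`. -/
noncomputable def ptOf (k : ℕ) : ℂ := if k = 0 then Complex.I else (k : ℂ)

lemma ptOf_zero : ptOf 0 = Complex.I := by simp [ptOf]

lemma ptOf_pos {k : ℕ} (h : 1 ≤ k) : ptOf k = (k : ℂ) := by
  simp [ptOf, Nat.one_le_iff_ne_zero.mp h]

lemma I_ne_natCast (k : ℕ) : Complex.I ≠ (k : ℂ) := by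
  intro h
  have := congrArg Complex.im h
  simp at this

lemma ptOf_inj {a b : ℕ} : ptOf a = ptOf b ↔ a = b := by
  constructor
  · intro h
    unfold ptOf at h
    split_ifs at h with h1 h2 h2
    · omega
    · exact absurd h (I_ne_natCast b)
    · exact absurd h.symm (I_ne_natCast a)
    · exact_mod_cast h
  · rintro rfl; rfl

lemma ptOf_injective : Function.Injective ptOf := fun _ _ h => ptOf_inj.mp h

lemma mem_Tconfig {n : ℕ} {z : ℂ} : z ∈ Tconfig n ↔ ∃ k ≤ n, ptOf k = z := by
  simp only [Tconfig, Finset.mem_union, Finset.mem_image, Finset.mem_Icc, Finset.mem_singleton]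
  constructor
  · rintro (⟨k, hk, rfl⟩ | rfl)
    · exact ⟨k, hk.2, ptOf_pos hk.1⟩
    · exact ⟨0, Nat.zero_le _, ptOf_zero⟩
  · rintro ⟨k, hk, rfl⟩
    rcases Nat.eq_zero_or_pos k with rfl | h
    · right; exact ptOf_zero
    · left; exact ⟨k, ⟨h, hk⟩, (ptOf_pos h).symm⟩

lemma ptOf_mem {n k : ℕ} : ptOf k ∈ Tconfig n ↔ k ≤ n := by
  rw [mem_Tconfig]
  constructor
  · rintro ⟨j, hj, h⟩
    rw [ptOf_inj] at h
    omega
  · intro h; exact ⟨k, h, rfl⟩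

/-- Combinatorial noncrossing condition on setoids on `ℕ` supported on `{0,…,n}`. -/
def Good (n : ℕ) (r : Setoid ℕ) : Prop :=
  (∀ a b, r a b → a ≠ b → a ≤ n) ∧ ∀ a b c, 1 ≤ a → a < b → b < c → r a c → r a b

lemma Good.right_le {n : ℕ} {r : Setoid ℕ} (h : Good n r) {a b : ℕ} (hr : r a b) (hab : a ≠ b) :
    b ≤ n := h.1 b a (r.symm' hr) (Ne.symm hab)

/-- The setoid on labels attached to a noncrossing partition. -/
def relOf {n : ℕ} (μ : NC (Tconfig n)) : Setoid ℕ where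
  r a b := a = b ∨ μ.SameBlock (ptOf a) (ptOf b)
  iseqv := by
    refine ⟨fun a => Or.inl rfl, ?_, ?_⟩
    · rintro a b (rfl | ⟨B, hB, h1, h2⟩)
      · exact Or.inl rfl
      · exact Or.inr ⟨B, hB, h2, h1⟩
    · rintro a b c (rfl | ⟨B, hB, h1, h2⟩)
      · exact id
      · rintro (rfl | ⟨C, hC, h3, h4⟩)
        · exact Or.inr ⟨B, hB, h1, h2⟩
        · have : B = C := μ.1.eq_of_mem_parts hB hC h2 h3
          subst this
          exact Or.inr ⟨B, hB, h1, h4⟩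

lemma relOf_iff {n : ℕ} (μ : NC (Tconfig n)) {a b : ℕ} :
    relOf μ a b ↔ a = b ∨ μ.SameBlock (ptOf a) (ptOf b) := Iff.rfl

lemma relOf_iff_of_le {n : ℕ} (μ : NC (Tconfig n)) {a b : ℕ} (ha : a ≤ n) :
    relOf μ a b ↔ μ.SameBlock (ptOf a) (ptOf b) := by
  rw [relOf_iff]
  constructor
  · rintro (rfl | h)
    · obtain ⟨B, hB, h⟩ := μ.1.exists_mem (ptOf_mem.mpr ha)
      exact ⟨B, hB, h, h⟩
    · exact h
  · exact Or.inr

lemma relOf_good {n : ℕ} (μ : NC (Tconfig n)) : Good n (relOf μ) := by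
  constructor
  · rintro a b (rfl | ⟨B, hB, h1, h2⟩) hab
    · exact absurd rfl hab
    · exact ptOf_mem.mp (μ.1.le hB h1)
  · rintro a b c ha hab hbc (rfl | ⟨B, hB, h1, h2⟩)
    · omega
    · right
      have hc : c ≤ n := ptOf_mem.mp (μ.1.le hB h2)
      obtain ⟨C, hC, h3⟩ := μ.1.exists_mem (ptOf_mem.mpr (show b ≤ n by omega))
      by_cases hBC : B = C
      · subst hBC; exact ⟨B, hB, h1, h3⟩
      · exfalso
        refine Set.disjoint_left.mp (μ.2 hB hC hBC) (?_ : ptOf b ∈ _)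
          (subset_convexHull ℝ _ h3)
        have hs := (convex_convexHull ℝ (B : Set ℂ)).segment_subset
          (subset_convexHull ℝ _ h1) (subset_convexHull ℝ _ h2)
        apply hs
        rw [ptOf_pos ha, ptOf_pos (by omega : 1 ≤ b), ptOf_pos (by omega : 1 ≤ c)]
        have hab' : (a : ℝ) < b := by exact_mod_cast hab
        have hbc' : (b : ℝ) < c := by exact_mod_cast hbc
        have hpos : (0 : ℝ) < c - a := by linarith
        refine ⟨((c : ℝ) - b) / (c - a), ((b : ℝ) - a) / (c - a), ?_, ?_, ?_, ?_⟩
        · exact div_nonneg (by linarith) hpos.le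
        · exact div_nonneg (by linarith) hpos.le
        · field_simp; ring
        · apply Complex.ext
          · simp only [Complex.add_re, Complex.smul_re, Complex.natCast_re, smul_eq_mul]
            field_simp; ring
          · simp only [Complex.add_im, Complex.smul_im, Complex.natCast_im, smul_eq_mul, mul_zero,
              add_zero]

lemma relOf_le_iff {n : ℕ} (μ ν : NC (Tconfig n)) : relOf μ ≤ relOf ν ↔ μ ≤ ν := by
  constructor
  · intro h B hB
    obtain ⟨z, hz⟩ := μ.1.nonempty_of_mem_parts hB
    obtain ⟨a, ha, rfl⟩ := mem_Tconfig.mp (μ.1.le hB hz)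
    obtain ⟨C, hC, h3⟩ := ν.1.exists_mem (ptOf_mem.mpr ha)
    refine ⟨C, hC, ?_⟩
    intro w hw
    obtain ⟨b, hb, rfl⟩ := mem_Tconfig.mp (μ.1.le hB hw)
    have h1 : relOf μ a b := Or.inr ⟨B, hB, hz, hw⟩
    obtain ⟨D, hD, h4, h5⟩ := (relOf_iff_of_le ν ha).mp (h h1)
    have : D = C := ν.1.eq_of_mem_parts hD hC h4 h3
    rwa [← this]
  · rintro h a b (rfl | ⟨B, hB, h1, h2⟩)
    · exact Or.inl rfl
    · obtain ⟨C, hC, hBC⟩ := h hB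
      exact Or.inr ⟨C, hC, hBC h1, hBC h2⟩

lemma convex_right (t : ℝ) : Convex ℝ {z : ℂ | 0 ≤ z.im ∧ (z.im = 0 → t < z.re)} := by
  rintro x ⟨hx1, hx2⟩ y ⟨hy1, hy2⟩ a b ha hb hab
  simp only [Set.mem_ofPred_eq, Complex.add_im, Complex.add_re, Complex.smul_im, Complex.smul_re,
    smul_eq_mul]
  have h1 := mul_nonneg ha hx1
  have h2 := mul_nonneg hb hy1
  refine ⟨by linarith, fun h => ?_⟩
  have h3 : a * x.im = 0 := by linarith
  have h4 : b * y.im = 0 := by linarith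
  rcases ha.eq_or_lt with rfl | ha'
  · have : b = 1 := by linarith
    subst this
    have := hy2 (by linarith)
    linarith
  · have h5 := hx2 ((mul_eq_zero.mp h3).resolve_left ha'.ne')
    rcases hb.eq_or_lt with rfl | hb'
    · have : a = 1 := by linarith
      subst this
      linarith
    · have h6 := hy2 ((mul_eq_zero.mp h4).resolve_left hb'.ne')
      have h7 := mul_lt_mul_of_pos_left h5 ha'
      have h8 := mul_lt_mul_of_pos_left h6 hb'
      have h9 : a * t + b * t = t := by rw [← add_mul, hab, one_mul]
      linarith

lemma convex_left (t : ℝ) : Convex ℝ {z : ℂ | 0 ≤ z.im ∧ (z.im = 0 → z.re < t)} := by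
  rintro x ⟨hx1, hx2⟩ y ⟨hy1, hy2⟩ a b ha hb hab
  simp only [Set.mem_ofPred_eq, Complex.add_im, Complex.add_re, Complex.smul_im, Complex.smul_re,
    smul_eq_mul]
  have h1 := mul_nonneg ha hx1
  have h2 := mul_nonneg hb hy1
  refine ⟨by linarith, fun h => ?_⟩
  have h3 : a * x.im = 0 := by linarith
  have h4 : b * y.im = 0 := by linarith
  rcases ha.eq_or_lt with rfl | ha'
  · have : b = 1 := by linarith
    subst this
    have := hy2 (by linarith)
    linarith
  · have h5 := hx2 ((mul_eq_zero.mp h3).resolve_left ha'.ne')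
    rcases hb.eq_or_lt with rfl | hb'
    · have : a = 1 := by linarith
      subst this
      linarith
    · have h6 := hy2 ((mul_eq_zero.mp h4).resolve_left hb'.ne')
      have h7 := mul_lt_mul_of_pos_left h5 ha'
      have h8 := mul_lt_mul_of_pos_left h6 hb'
      have h9 : a * t + b * t = t := by rw [← add_mul, hab, one_mul]
      linarith

lemma convex_lowRight (t : ℝ) : Convex ℝ {z : ℂ | z.im = 0 ∧ t ≤ z.re} := by
  rintro x ⟨hx1, hx2⟩ y ⟨hy1, hy2⟩ a b ha hb hab
  simp only [Set.mem_ofPred_eq, Complex.add_im, Complex.add_re, Complex.smul_im, Complex.smul_re,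
    smul_eq_mul, hx1, hy1]
  have : a * t + b * t = t := by rw [← add_mul, hab, one_mul]
  exact ⟨by simp, by nlinarith [mul_le_mul_of_nonneg_left hx2 ha, mul_le_mul_of_nonneg_left hy2 hb]⟩

lemma convex_lowLeft (t : ℝ) : Convex ℝ {z : ℂ | z.im = 0 ∧ z.re ≤ t} := by
  rintro x ⟨hx1, hx2⟩ y ⟨hy1, hy2⟩ a b ha hb hab
  simp only [Set.mem_ofPred_eq, Complex.add_im, Complex.add_re, Complex.smul_im, Complex.smul_re,
    smul_eq_mul, hx1, hy1]
  have : a * t + b * t = t := by rw [← add_mul, hab, one_mul]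
  exact ⟨by simp, by nlinarith [mul_le_mul_of_nonneg_left hx2 ha, mul_le_mul_of_nonneg_left hy2 hb]⟩

/-- Separation of two label sets: `S ⊆ ℕ` positive and every positive element of `R` is to the
same side of `S`. -/
lemma hull_disjoint_of_lt {B C : Finset ℂ} (t : ℕ)
    (hB : ∀ z ∈ B, ∃ k, 1 ≤ k ∧ k ≤ t ∧ ptOf k = z)
    (hC : ∀ z ∈ C, ∃ k, (1 ≤ k → t < k) ∧ ptOf k = z) :
    Disjoint (convexHull ℝ (B : Set ℂ)) (convexHull ℝ (C : Set ℂ)) := by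
  have h1 : convexHull ℝ (B : Set ℂ) ⊆ {z : ℂ | z.im = 0 ∧ z.re ≤ (t : ℝ)} := by
    refine convexHull_min ?_ (convex_lowLeft _)
    intro z hz
    obtain ⟨k, hk, hkt, rfl⟩ := hB z hz
    rw [ptOf_pos hk]
    simpa using hkt
  have h2 : convexHull ℝ (C : Set ℂ) ⊆ {z : ℂ | 0 ≤ z.im ∧ (z.im = 0 → (t : ℝ) < z.re)} := by
    refine convexHull_min ?_ (convex_right _)
    intro z hz
    obtain ⟨k, hk, rfl⟩ := hC z hz
    rcases Nat.eq_zero_or_pos k with rfl | h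
    · rw [ptOf_zero]; simp
    · rw [ptOf_pos h]
      simpa using hk h
  refine Set.disjoint_left.mpr fun z hz hz' => ?_
  have h3 := h1 hz
  have h4 := (h2 hz').2 h3.1
  exact absurd h3.2 (not_le.mpr h4)

lemma hull_disjoint_of_gt {B C : Finset ℂ} (t : ℕ)
    (hB : ∀ z ∈ B, ∃ k, 1 ≤ k ∧ t ≤ k ∧ ptOf k = z)
    (hC : ∀ z ∈ C, ∃ k, (1 ≤ k → k < t) ∧ ptOf k = z) :
    Disjoint (convexHull ℝ (B : Set ℂ)) (convexHull ℝ (C : Set ℂ)) := by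
  have h1 : convexHull ℝ (B : Set ℂ) ⊆ {z : ℂ | z.im = 0 ∧ (t : ℝ) ≤ z.re} := by
    refine convexHull_min ?_ (convex_lowRight _)
    intro z hz
    obtain ⟨k, hk, hkt, rfl⟩ := hB z hz
    rw [ptOf_pos hk]
    simpa using hkt
  have h2 : convexHull ℝ (C : Set ℂ) ⊆ {z : ℂ | 0 ≤ z.im ∧ (z.im = 0 → z.re < (t : ℝ))} := by
    refine convexHull_min ?_ (convex_left _)
    intro z hz
    obtain ⟨k, hk, rfl⟩ := hC z hz
    rcases Nat.eq_zero_or_pos k with rfl | h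
    · rw [ptOf_zero]; simp
    · rw [ptOf_pos h]
      simpa using hk h
  refine Set.disjoint_left.mpr fun z hz hz' => ?_
  have h3 := h1 hz
  have h4 := (h2 hz').2 h3.1
  exact absurd h3.2 (not_le.mpr h4)

/-- Two distinct classes, the first not containing the label `0`, have disjoint hulls. -/
lemma class_disjoint {n : ℕ} {r : Setoid ℕ} (hr : Good n r) {a c : ℕ} (han : a ≤ n) (hac : ¬ r a c)
    (h0 : ¬ r a 0) {B C : Finset ℂ}
    (hB : ∀ z, z ∈ B ↔ ∃ k ≤ n, r a k ∧ ptOf k = z)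
    (hC : ∀ z, z ∈ C ↔ ∃ k ≤ n, r c k ∧ ptOf k = z) :
    Disjoint (convexHull ℝ (B : Set ℂ)) (convexHull ℝ (C : Set ℂ)) := by
  have pos : ∀ k, r a k → 1 ≤ k := by
    intro k hk
    by_contra h
    have : k = 0 := by omega
    subst this
    exact h0 hk
  have key : ∀ k l, r a k → r c l → k ≠ l := by
    rintro k _ h1 h2 rfl
    exact hac (r.trans' h1 (r.symm' h2))
  have conv1 : ∀ k k' l, r a k → r a k' → r c l → ¬ (k < l ∧ l < k') := by
    rintro k k' l h1 h2 h3 ⟨h4, h5⟩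
    have := hr.2 k l k' (pos k h1) h4 h5 (r.trans' (r.symm' h1) h2)
    exact key l l (r.trans' h1 this) h3 rfl
  have conv2 : ∀ k l l', 1 ≤ l → r a k → r c l → r c l' → ¬ (l < k ∧ k < l') := by
    rintro k l l' hl h1 h2 h3 ⟨h4, h5⟩
    have := hr.2 l k l' hl h4 h5 (r.trans' (r.symm' h2) h3)
    exact key k k h1 (r.trans' h2 this) rfl
  have raa : r a a := r.refl' a
  have pa := pos a raa
  by_cases hside : ∃ l, 1 ≤ l ∧ r c l ∧ l < a
  · obtain ⟨l, hl, hcl, hla⟩ := hside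
    classical
    have hex : ∃ k, r a k := ⟨a, raa⟩
    have hmin := Nat.find_spec hex
    have hle : ∀ k, r a k → Nat.find hex ≤ k := fun k hk => Nat.find_min' hex hk
    generalize Nat.find hex = t at hmin hle
    refine hull_disjoint_of_gt t ?_ ?_
    · intro z hz
      obtain ⟨k, hk, hak, rfl⟩ := (hB z).mp hz
      exact ⟨k, pos k hak, hle k hak, rfl⟩
    · intro z hz
      obtain ⟨l', hl', hcl', rfl⟩ := (hC z).mp hz
      refine ⟨l', fun h1 => ?_, rfl⟩
      have e1 := conv1 t a l hmin raa hcl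
      have e2 := key t l hmin hcl
      have e3 := key t l' hmin hcl'
      have e4 := conv2 t l l' hl hmin hcl hcl'
      omega
  · classical
    obtain ⟨t, ht, hmax⟩ := Finset.exists_max_image ((Finset.range (n + 1)).filter (fun k => r a k))
      id ⟨a, by simp; omega⟩
    simp only [Finset.mem_filter, Finset.mem_range, id] at ht hmax
    refine hull_disjoint_of_lt t ?_ ?_
    · intro z hz
      obtain ⟨k, hk, hak, rfl⟩ := (hB z).mp hz
      exact ⟨k, pos k hak, hmax k ⟨by omega, hak⟩, rfl⟩
    · intro z hz
      obtain ⟨l', hl', hcl', rfl⟩ := (hC z).mp hz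
      refine ⟨l', fun h1 => ?_, rfl⟩
      have e1 := conv1 a t l' raa ht.2 hcl'
      have e2 := key t l' ht.2 hcl'
      have e3 := key a l' raa hcl'
      have e4 : ¬ l' < a := fun h => hside ⟨l', h1, hcl', h⟩
      omega

lemma relOf_surj {n : ℕ} {r : Setoid ℕ} (hr : Good n r) : ∃ μ : NC (Tconfig n), relOf μ = r := by
  classical
  obtain ⟨q, hq⟩ : ∃ q : ℂ → ℕ, ∀ k, q (ptOf k) = k :=
    ⟨Function.invFun ptOf, Function.leftInverse_invFun ptOf_injective⟩
  let π : Finpartition (Tconfig n) := Finpartition.ofSetSetoid (Setoid.comap q r) (Tconfig n)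
  have hpart : ∀ B ∈ π.parts, ∃ a ≤ n, ∀ z, z ∈ B ↔ ∃ k ≤ n, r a k ∧ ptOf k = z := by
    intro B hB
    obtain ⟨z, hz⟩ := π.nonempty_of_mem_parts hB
    obtain ⟨a, ha, rfl⟩ := mem_Tconfig.mp (π.le hB hz)
    refine ⟨a, ha, fun w => ?_⟩
    rw [← π.part_eq_of_mem hB hz, Finpartition.mem_part_ofSetSetoid_iff_rel, ptOf_mem, mem_Tconfig]
    constructor
    · rintro ⟨_, ⟨k, hk, rfl⟩, h⟩
      rw [Setoid.comap_rel, hq, hq] at h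
      exact ⟨k, hk, h, rfl⟩
    · rintro ⟨k, hk, h, rfl⟩
      refine ⟨ha, ⟨k, hk, rfl⟩, ?_⟩
      rw [Setoid.comap_rel, hq, hq]
      exact h
  have hnc : IsNoncrossing π := by
    intro B hB C hC hBC
    obtain ⟨a, ha, hBa⟩ := hpart B hB
    obtain ⟨c, hc, hCc⟩ := hpart C hC
    have hac : ¬ r a c := by
      intro h
      apply hBC
      exact π.eq_of_mem_parts hB hC ((hBa (ptOf c)).mpr ⟨c, hc, h, rfl⟩)
        ((hCc (ptOf c)).mpr ⟨c, hc, r.refl' c, rfl⟩)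
    by_cases h0 : r a 0
    · have h0' : ¬ r c 0 := fun h => hac (r.trans' h0 (r.symm' h))
      exact (class_disjoint hr hc (fun h => hac (r.symm' h)) h0' hCc hBa).symm
    · exact class_disjoint hr ha hac h0 hBa hCc
  refine ⟨⟨π, hnc⟩, ?_⟩
  ext a b
  have hsame : NC.SameBlock ⟨π, hnc⟩ (ptOf a) (ptOf b) ↔ a ≤ n ∧ b ≤ n ∧ r a b := by
    have h1 : NC.SameBlock ⟨π, hnc⟩ (ptOf a) (ptOf b) ↔ ptOf a ∈ π.part (ptOf b) :=
      (Finpartition.mem_part_iff_exists π).symm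
    rw [h1, Finpartition.mem_part_ofSetSetoid_iff_rel, Setoid.comap_rel, hq, hq, ptOf_mem, ptOf_mem]
    constructor
    · rintro ⟨x, y, z⟩; exact ⟨y, x, r.symm' z⟩
    · rintro ⟨x, y, z⟩; exact ⟨y, x, r.symm' z⟩
  rw [relOf_iff, hsame]
  constructor
  · rintro (rfl | h)
    · exact r.refl' a
    · exact h.2.2
  · intro h
    by_cases hab : a = b
    · exact Or.inl hab
    · exact Or.inr ⟨hr.1 a b h hab, hr.right_le h hab, h⟩

/-- Combinatorial version of condition `A`. -/
def CA (n : ℕ) (r : Setoid ℕ) : Prop := (∀ a, r a n → a = n) ∨ r (n - 1) n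

/-- Combinatorial version of condition `B`. -/
def CB (n : ℕ) (r : Setoid ℕ) : Prop := r 0 n ∧ ∀ a, r a n → a = 0 ∨ a = n

lemma condA_iff {n : ℕ} (hn : 2 ≤ n) (μ : NC (Tconfig n)) : TcondA n μ ↔ CA n (relOf μ) := by
  have e1 : ptOf n = (n : ℂ) := ptOf_pos (by omega)
  have e2 : ptOf (n - 1) = ((n - 1 : ℕ) : ℂ) := ptOf_pos (by omega)
  unfold TcondA CA
  rw [relOf_iff_of_le μ (by omega : n - 1 ≤ n), ← e1, ← e2]
  refine or_congr ?_ Iff.rfl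
  constructor
  · rintro h a (rfl | ⟨B, hB, h1, h2⟩)
    · rfl
    · have : B = {ptOf n} := μ.1.eq_of_mem_parts hB h h2 (Finset.mem_singleton_self _)
      subst this
      exact ptOf_inj.mp (Finset.mem_singleton.mp h1)
  · intro h
    obtain ⟨B, hB, h1⟩ := μ.1.exists_mem (ptOf_mem.mpr le_rfl)
    have : B = {ptOf n} := by
      ext z
      rw [Finset.mem_singleton]
      constructor
      · intro hz
        obtain ⟨a, ha, rfl⟩ := mem_Tconfig.mp (μ.1.le hB hz)
        rw [h a (Or.inr ⟨B, hB, hz, h1⟩)]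
      · rintro rfl; exact h1
    rw [← this]; exact hB

lemma condB_iff {n : ℕ} (hn : 2 ≤ n) (μ : NC (Tconfig n)) : TcondB n μ ↔ CB n (relOf μ) := by
  have e1 : ptOf n = (n : ℂ) := ptOf_pos (by omega)
  unfold TcondB CB
  rw [relOf_iff_of_le μ (by omega : 0 ≤ n), ← e1, ← ptOf_zero]
  constructor
  · intro h
    refine ⟨⟨_, h, by simp, by simp⟩, ?_⟩
    rintro a (rfl | ⟨B, hB, h1, h2⟩)
    · exact Or.inr rfl
    · have : B = {ptOf n, ptOf 0} := μ.1.eq_of_mem_parts hB h h2 (by simp)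
      subst this
      simp only [Finset.mem_insert, Finset.mem_singleton, ptOf_inj] at h1
      exact h1.symm
  · rintro ⟨⟨B, hB, h1, h2⟩, h⟩
    have : B = {ptOf n, ptOf 0} := by
      ext z
      simp only [Finset.mem_insert, Finset.mem_singleton]
      constructor
      · intro hz
        obtain ⟨a, ha, rfl⟩ := mem_Tconfig.mp (μ.1.le hB hz)
        rw [ptOf_inj, ptOf_inj]
        exact (h a (Or.inr ⟨B, hB, hz, h2⟩)).symm
      · rintro (rfl | rfl)
        · exact h2
        · exact h1
    rw [← this]; exact hB

/-! ### The combinatorial side -/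

lemma CA_or_CB {n : ℕ} (hn : 2 ≤ n) {r : Setoid ℕ} (hr : Good n r) : CA n r ∨ CB n r := by
  by_cases h : r (n - 1) n
  · exact Or.inl (Or.inr h)
  have key : ∀ a, r a n → a = 0 ∨ a = n := by
    intro a ha
    by_contra hcon
    have h1 : a ≤ n := hr.1 a n ha (by omega)
    have h2 : a ≠ n - 1 := by rintro rfl; exact h ha
    have h3 := hr.2 a (n - 1) n (by omega) (by omega) (by omega) ha
    exact h (r.trans' (r.symm' h3) ha)
  by_cases h0 : r 0 n
  · exact Or.inr ⟨h0, key⟩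
  · left; left
    intro a ha
    rcases key a ha with rfl | h
    · exact absurd ha h0
    · exact h

lemma not_CA_and_CB {n : ℕ} (hn : 2 ≤ n) {r : Setoid ℕ} : ¬ (CA n r ∧ CB n r) := by
  rintro ⟨h | h, h0, h1⟩
  · have := h 0 h0
    omega
  · have := h1 _ h
    omega

/-- Restriction of a setoid to labels `≤ m`. -/
def restr (m : ℕ) (r : Setoid ℕ) : Setoid ℕ where
  r a b := a = b ∨ (r a b ∧ a ≤ m ∧ b ≤ m)
  iseqv := by
    refine ⟨fun a => Or.inl rfl, ?_, ?_⟩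
    · rintro a b (rfl | ⟨h, h1, h2⟩)
      · exact Or.inl rfl
      · exact Or.inr ⟨r.symm' h, h2, h1⟩
    · rintro a b c (rfl | ⟨h, h1, h2⟩)
      · exact id
      · rintro (rfl | ⟨h', h3, h4⟩)
        · exact Or.inr ⟨h, h1, h2⟩
        · exact Or.inr ⟨r.trans' h h', h1, h4⟩

lemma restr_iff {m : ℕ} {r : Setoid ℕ} {a b : ℕ} :
    restr m r a b ↔ a = b ∨ (r a b ∧ a ≤ m ∧ b ≤ m) := Iff.rfl

lemma restr_good {n m : ℕ} {r : Setoid ℕ} (hr : Good n r) : Good m (restr m r) := by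
  constructor
  · rintro a b (rfl | ⟨h, h1, h2⟩) hab
    · exact absurd rfl hab
    · exact h1
  · rintro a b c ha hab hbc (rfl | ⟨h, h1, h2⟩)
    · omega
    · exact Or.inr ⟨hr.2 a b c ha hab hbc h, h1, by omega⟩

lemma le_of_restr_le {n : ℕ} (hn : 2 ≤ n) {r s : Setoid ℕ} (hr : Good n r) (hA : CA n r)
    (h1 : restr (n - 1) r ≤ restr (n - 1) s) (h2 : r (n - 1) n → s (n - 1) n) : r ≤ s := by
  have hlow : ∀ a b, a ≤ n - 1 → b ≤ n - 1 → r a b → s a b := by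
    intro a b ha hb hab
    rcases h1 (show restr (n - 1) r a b from Or.inr ⟨hab, ha, hb⟩) with rfl | h
    · exact s.refl' a
    · exact h.1
  have htop : ∀ a, a ≤ n - 1 → r a n → s a n := by
    intro a ha han
    rcases hA with h | h
    · have := h a han
      omega
    · exact s.trans' (hlow a (n - 1) ha le_rfl (r.trans' han (r.symm' h))) (h2 h)
  intro a b hab
  by_cases heq : a = b
  · subst heq; exact s.refl' a
  have ha := hr.1 a b hab heq
  have hb := hr.right_le hab heq
  by_cases han : a = n
  · subst han
    exact s.symm' (htop b (by omega) (r.symm' hab))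
  · by_cases hbn : b = n
    · subst hbn
      exact htop a (by omega) hab
    · exact hlow a b (by omega) (by omega) hab

/-- Attach `n` to the block of `n - 1`. -/
def attach1 (n : ℕ) (s : Setoid ℕ) : Setoid ℕ := Setoid.comap (fun k => if k = n then n - 1 else k) s

lemma attach1_iff {n : ℕ} {s : Setoid ℕ} {a b : ℕ} :
    attach1 n s a b ↔ s (if a = n then n - 1 else a) (if b = n then n - 1 else b) := Iff.rfl

lemma attach1_good {n : ℕ} (hn : 2 ≤ n) {s : Setoid ℕ} (hs : Good (n - 1) s) :
    Good n (attach1 n s) := by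
  constructor
  · intro a b h hab
    rw [attach1_iff] at h
    by_cases ha : a = n
    · omega
    rw [if_neg ha] at h
    by_cases hb : b = n
    · rw [if_pos hb] at h
      by_cases hx : a = n - 1
      · omega
      · have := hs.1 _ _ h hx
        omega
    · rw [if_neg hb] at h
      have := hs.1 _ _ h hab
      omega
  · intro a b c ha hab hbc h
    have hcn : c ≤ n := by
      by_contra hc
      rw [attach1_iff, if_neg (by omega : c ≠ n)] at h
      have := hs.right_le h (by split_ifs <;> omega)
      omega
    rw [attach1_iff] at h ⊢
    rw [if_neg (by omega : a ≠ n)] at h ⊢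
    rw [if_neg (by omega : b ≠ n)]
    by_cases hc : c = n
    · rw [if_pos hc] at h
      by_cases hb : b = n - 1
      · rw [hb]; exact h
      · exact hs.2 a b (n - 1) ha hab (by omega) h
    · rw [if_neg hc] at h
      exact hs.2 a b c ha hab hbc h

lemma good_mono {m n : ℕ} (h : m ≤ n) {r : Setoid ℕ} (hr : Good m r) : Good n r :=
  ⟨fun a b hab hne => (hr.1 a b hab hne).trans h, hr.2⟩

lemma restr_self {m : ℕ} {s : Setoid ℕ} (hs : Good m s) : restr m s = s := by
  ext a b
  rw [restr_iff]
  constructor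
  · rintro (rfl | h)
    · exact s.refl' a
    · exact h.1
  · intro h
    by_cases hab : a = b
    · exact Or.inl hab
    · exact Or.inr ⟨h, hs.1 a b h hab, hs.right_le h hab⟩

lemma restr_attach1 {n : ℕ} (hn : 2 ≤ n) {s : Setoid ℕ} (hs : Good (n - 1) s) :
    restr (n - 1) (attach1 n s) = s := by
  conv_rhs => rw [← restr_self hs]
  ext a b
  rw [restr_iff, restr_iff]
  refine or_congr Iff.rfl (and_congr_left ?_)
  rintro ⟨ha, hb⟩
  rw [attach1_iff, if_neg (by omega : a ≠ n), if_neg (by omega : b ≠ n)]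

/-- The setoid on `ℕ` whose blocks are intervals with links `k ~ k+1` for `k ∈ S`. -/
def linkSetoid (S : Set ℕ) : Setoid ℕ where
  r a b := ∀ k, min a b ≤ k → k < max a b → k ∈ S
  iseqv := by
    refine ⟨fun a k h1 h2 => by omega, fun h k h1 h2 => h k (by omega) (by omega), ?_⟩
    intro a b c h h' k h1 h2
    by_cases hk : min a b ≤ k ∧ k < max a b
    · exact h k hk.1 hk.2
    · exact h' k (by omega) (by omega)

lemma linkSetoid_iff {S : Set ℕ} {a b : ℕ} :
    linkSetoid S a b ↔ ∀ k, min a b ≤ k → k < max a b → k ∈ S := Iff.rfl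

/-- Element of `B` attached to a set of links. -/
def bSetoid (n : ℕ) (S : Set ℕ) : Setoid ℕ :=
  Setoid.comap (fun k => if k = 0 then n else k) (linkSetoid S)

lemma bSetoid_iff {n : ℕ} {S : Set ℕ} {a b : ℕ} : bSetoid n S a b ↔
    linkSetoid S (if a = 0 then n else a) (if b = 0 then n else b) := Iff.rfl

lemma bSetoid_good {n : ℕ} {S : Set ℕ} (hS : ∀ k ∈ S, 1 ≤ k ∧ k + 1 < n) :
    Good n (bSetoid n S) := by
  constructor
  · intro a b h hab
    by_contra hcon
    rw [bSetoid_iff, linkSetoid_iff, if_neg (by omega : a ≠ 0)] at h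
    split_ifs at h with hb
    · have := hS _ (h n (by omega) (by omega))
      omega
    · by_cases hlt : a < b
      · have := hS _ (h a (by omega) (by omega))
        omega
      · have := hS _ (h (a - 1) (by omega) (by omega))
        omega
  · intro a b c ha hab hbc h
    rw [bSetoid_iff, linkSetoid_iff, if_neg (by omega), if_neg (by omega)] at h ⊢
    intro k h1 h2
    exact h k (by omega) (by omega)

lemma bSetoid_CB {n : ℕ} (hn : 2 ≤ n) {S : Set ℕ} (hS : ∀ k ∈ S, 1 ≤ k ∧ k + 1 < n) :
    CB n (bSetoid n S) := by
  constructor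
  · rw [bSetoid_iff, if_pos rfl, if_neg (by omega)]
  · intro a h
    by_contra hcon
    rw [bSetoid_iff, linkSetoid_iff, if_neg (by omega), if_neg (by omega)] at h
    by_cases hlt : a < n
    · have := hS _ (h (n - 1) (by omega) (by omega))
      omega
    · have := hS _ (h n (by omega) (by omega))
      omega

lemma le_of_links {n : ℕ} {r s : Setoid ℕ} (hr : Good n r) (hrB : CB n r) (hsB : CB n s)
    (h : ∀ k, 1 ≤ k → k + 1 < n → r k (k + 1) → s k (k + 1)) : r ≤ s := by
  have main : ∀ d a, 1 ≤ a → a + d < n → r a (a + d) → s a (a + d) := by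
    intro d
    induction d with
    | zero => intro a _ _ _; exact s.refl' a
    | succ d ih =>
      intro a ha hd har
      have h1 : r a (a + d) := by
        rcases Nat.eq_zero_or_pos d with rfl | hpos
        · exact r.refl' a
        · exact hr.2 a (a + d) (a + (d + 1)) ha (by omega) (by omega) har
      have h2 := h (a + d) (by omega) (by omega) (r.trans' (r.symm' h1) har)
      exact s.trans' (ih a ha (by omega) h1) h2
  have wlog1 : ∀ a b, a < b → r a b → s a b := by
    intro a b hab har
    have hb := hr.right_le har (by omega)
    rcases Nat.eq_zero_or_pos a with rfl | ha
    · rcases hrB.2 b (r.trans' (r.symm' har) hrB.1) with rfl | rfl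
      · omega
      · exact hsB.1
    · by_cases hbn : b = n
      · subst hbn
        have := hrB.2 a har
        omega
      · obtain ⟨d, rfl⟩ := Nat.exists_eq_add_of_lt hab
        exact main (d + 1) a ha (by omega) har
  intro a b hab
  rcases lt_trichotomy a b with hlt | rfl | hlt
  · exact wlog1 a b hlt hab
  · exact s.refl' a
  · exact s.symm' (wlog1 b a hlt (r.symm' hab))

lemma partA (n : ℕ) (hn : 2 ≤ n) :
    Nonempty ({μ : NC (Tconfig n) // TcondA n μ} ≃o NC (Tconfig (n - 1)) × Fin 2) := by
  classical
  have hex : ∀ μ : {μ : NC (Tconfig n) // TcondA n μ}, ∃ ν : NC (Tconfig (n - 1)),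
      relOf ν = restr (n - 1) (relOf μ.1) := fun μ => relOf_surj (restr_good (relOf_good μ.1))
  choose g hg using hex
  let f : {μ : NC (Tconfig n) // TcondA n μ} → NC (Tconfig (n - 1)) × Fin 2 := fun μ =>
    (g μ, if relOf μ.1 (n - 1) n then 1 else 0)
  have hf : ∀ μ ν, f μ ≤ f ν ↔ μ ≤ ν := by
    intro μ ν
    have h1 : f μ ≤ f ν ↔ restr (n - 1) (relOf μ.1) ≤ restr (n - 1) (relOf ν.1) ∧
        (relOf μ.1 (n - 1) n → relOf ν.1 (n - 1) n) := by
      rw [Prod.le_def]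
      refine and_congr ?_ ?_
      · rw [← hg, ← hg, relOf_le_iff]
      · by_cases h : relOf μ.1 (n - 1) n <;> by_cases h' : relOf ν.1 (n - 1) n <;>
          simp [f, h, h']
    have h2 : μ ≤ ν ↔ relOf μ.1 ≤ relOf ν.1 := by
      rw [relOf_le_iff]; rfl
    rw [h1, h2]
    constructor
    · rintro ⟨h3, h4⟩
      exact le_of_restr_le hn (relOf_good _) ((condA_iff hn _).mp μ.2) h3 h4
    · intro h
      refine ⟨?_, fun h' => h h'⟩
      rintro a b (rfl | ⟨h3, h4⟩)
      · exact Or.inl rfl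
      · exact Or.inr ⟨h h3, h4⟩
  refine ⟨OrderIso.ofSurjective (OrderEmbedding.ofMapLEIff f hf) ?_⟩
  have rel_inj : ∀ x y : NC (Tconfig (n - 1)), relOf x = relOf y → x = y := fun x y h =>
    le_antisymm ((relOf_le_iff _ _).mp h.le) ((relOf_le_iff _ _).mp h.ge)
  rintro ⟨ν, i⟩
  have hν := relOf_good ν
  have hi : i = 0 ∨ i = 1 := by omega
  rcases hi with rfl | rfl
  · obtain ⟨μ, hμ⟩ := relOf_surj (good_mono (Nat.sub_le n 1) hν)
    have hiso : ∀ a, relOf ν a n → a = n := by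
      intro a ha
      by_contra hne
      have := hν.right_le ha hne
      omega
    refine ⟨⟨μ, (condA_iff hn μ).mpr (Or.inl (by rw [hμ]; exact hiso))⟩, ?_⟩
    have hno : ¬ relOf μ (n - 1) n := by
      rw [hμ]; intro h
      have := hiso _ h
      omega
    refine Prod.ext ?_ ?_
    · apply rel_inj
      change relOf (g _) = _
      rw [hg, hμ, restr_self hν]
    · exact if_neg hno
  · obtain ⟨μ, hμ⟩ := relOf_surj (attach1_good hn hν)
    have hyes : relOf μ (n - 1) n := by
      rw [hμ, attach1_iff, if_neg (by omega), if_pos rfl]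
    refine ⟨⟨μ, (condA_iff hn μ).mpr (Or.inr hyes)⟩, ?_⟩
    refine Prod.ext ?_ ?_
    · apply rel_inj
      change relOf (g _) = _
      rw [hg, hμ, restr_attach1 hn hν]
    · exact if_pos hyes

lemma partB (n : ℕ) (hn : 2 ≤ n) :
    Nonempty ({μ : NC (Tconfig n) // TcondB n μ} ≃o Finset (Fin (n - 2))) := by
  classical
  let f : {μ : NC (Tconfig n) // TcondB n μ} → Finset (Fin (n - 2)) := fun μ =>
    Finset.univ.filter fun i => relOf μ.1 (i.1 + 1) (i.1 + 2)
  have hmem : ∀ μ i, i ∈ f μ ↔ relOf μ.1 (i.1 + 1) (i.1 + 2) := fun μ i => by simp [f]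
  have hf : ∀ μ ν, f μ ≤ f ν ↔ μ ≤ ν := by
    intro μ ν
    have h2 : μ ≤ ν ↔ relOf μ.1 ≤ relOf ν.1 := by
      rw [relOf_le_iff]; rfl
    rw [h2]
    constructor
    · intro h
      refine le_of_links (relOf_good _) ((condB_iff hn _).mp μ.2) ((condB_iff hn _).mp ν.2) ?_
      intro k hk hkn hr
      obtain ⟨j, rfl⟩ := Nat.exists_eq_add_of_le' hk
      exact (hmem ν ⟨j, by omega⟩).mp (h ((hmem μ ⟨j, by omega⟩).mpr hr))
    · intro h i hi
      exact (hmem ν i).mpr (h ((hmem μ i).mp hi))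
  refine ⟨OrderIso.ofSurjective (OrderEmbedding.ofMapLEIff f hf) ?_⟩
  intro S
  let S' : Set ℕ := {k | ∃ i ∈ S, k = i.1 + 1}
  have hS' : ∀ k ∈ S', 1 ≤ k ∧ k + 1 < n := by
    rintro k ⟨i, hi, rfl⟩
    have := i.2
    omega
  obtain ⟨μ, hμ⟩ := relOf_surj (bSetoid_good hS')
  refine ⟨⟨μ, (condB_iff hn μ).mpr (by rw [hμ]; exact bSetoid_CB hn hS')⟩, ?_⟩
  ext i
  refine (hmem _ i).trans ?_
  change relOf μ _ _ ↔ _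
  rw [hμ, bSetoid_iff, linkSetoid_iff, if_neg (by omega), if_neg (by omega)]
  constructor
  · intro h
    obtain ⟨j, hj, hij⟩ := h (i.1 + 1) (by omega) (by omega)
    have : i = j := Fin.ext (by omega)
    rw [this]; exact hj
  · intro hi k h1 h2
    exact ⟨i, hi, by omega⟩

/-- For `n ≥ 2`: the subposet `A` of `NC(T_n)` where `x_n` is a singleton or blocks with
`x_{n-1}` is isomorphic to `NC(T_{n-1})` times a two-element chain; the subposet `B`
where `{x_n, y}` is a block is isomorphic to the Boolean lattice of subsets of an
`(n-2)`-element set; and `NC(T_n)` is the disjoint union of `A` and `B`. -/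
theorem nc_T_recursive (n : ℕ) (hn : 2 ≤ n) :
    Nonempty ({μ : NC (Tconfig n) // TcondA n μ} ≃o NC (Tconfig (n - 1)) × Fin 2) ∧
    Nonempty ({μ : NC (Tconfig n) // TcondB n μ} ≃o Finset (Fin (n - 2))) ∧
    ∀ μ : NC (Tconfig n), (TcondA n μ ∨ TcondB n μ) ∧ ¬(TcondA n μ ∧ TcondB n μ) := by
  refine ⟨partA n hn, partB n hn, fun μ => ?_⟩
  rw [condA_iff hn, condB_iff hn]
  exact ⟨CA_or_CB hn (relOf_good μ), not_CA_and_CB hn⟩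
end

section
/- For every n ≥ 0, the poset NC(T_n) admits a symmetric chain decomposition: its underlying set can be partitioned into saturated chains C (each consecutive pair of elements of C is a covering pair in NC(T_n)) such that for each chain C, ρ(min C) + ρ(max C) = |T_n| − 1 = n, where ρ(π) = |T_n| − (number of blocks of π). -/
open Finset

/-- Symmetric chain decomposition of Boolean lattices. -/
lemma bool_scd (S : Finset ℕ) : ∃ L : Set (List (Finset ℕ)), [] ∉ L ∧
    (∀ l ∈ L, ∀ A ∈ l, A ⊆ S) ∧ (∀ A, A ⊆ S → ∃! l, l ∈ L ∧ A ∈ l) ∧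
    (∀ l ∈ L, l.IsChain (fun A B : Finset ℕ => A ⊆ B ∧ #B = #A + 1)) ∧
    ∀ l ∈ L, ∀ h : l ≠ [], #(l.head h) + #(l.getLast h) = #S := by
  induction S using Finset.induction_on with
  | empty =>
    refine ⟨{[∅]}, by simp, by simp, ?_, by simp, by simp⟩
    intro A hA
    rw [Finset.subset_empty] at hA
    subst hA
    exact ⟨[∅], by simp, by simp⟩
  | insert a S ha ih =>
    obtain ⟨L, h0, hsub, hex, hch, hrk⟩ := ih
    have hnd : ∀ m z, m ++ [z] ∈ L → z ∉ m := by
      intro m z h hz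
      have h1 := (hch _ h).imp (S := fun A B : Finset ℕ => #A < #B) (by intro A B h; omega)
      have : Trans (fun A B : Finset ℕ => #A < #B) (fun A B : Finset ℕ => #A < #B)
        (fun A B : Finset ℕ => #A < #B) := ⟨fun h h' => lt_trans h h'⟩
      have h2 := List.isChain_iff_pairwise.1 h1
      rw [List.pairwise_append] at h2
      have := h2.2.2 z hz z (by simp)
      omega
    have hdec : ∀ l ∈ L, ∃ m z, l = m ++ [z] := by
      intro l hl
      have : l ≠ [] := fun h => h0 (h ▸ hl)
      exact ⟨l.dropLast, l.getLast this, (List.dropLast_append_getLast this).symm⟩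
    have hna : ∀ l ∈ L, ∀ A ∈ l, a ∉ A := fun l hl A hA h => ha (hsub l hl A hA h)
    refine ⟨{l' | ∃ m z, m ++ [z] ∈ L ∧ (l' = m ++ [z] ++ [insert a z] ∨
      (m ≠ [] ∧ l' = m.map (insert a)))}, ?_, ?_, ?_, ?_, ?_⟩
    · rintro ⟨m, z, h, h1 | ⟨h1, h2⟩⟩
      · simp at h1
      · exact h1 (by simpa using h2.symm)
    · rintro l ⟨m, z, h, rfl | ⟨h1, rfl⟩⟩ A hA
      · rw [List.mem_append] at hA
        rcases hA with hA | hA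
        · exact (hsub _ h A hA).trans (Finset.subset_insert _ _)
        · rw [List.mem_singleton] at hA
          subst hA
          exact Finset.insert_subset_insert _ (hsub _ h z (by simp))
      · rw [List.mem_map] at hA
        obtain ⟨B, hB, rfl⟩ := hA
        exact Finset.insert_subset_insert _ (hsub _ h B (by simp [hB]))
    · intro A hA
      by_cases haA : a ∈ A
      · have hA0 : A.erase a ⊆ S := by
          intro x hx
          have := hA (Finset.mem_of_mem_erase hx)
          rw [Finset.mem_insert] at this
          exact this.resolve_left (Finset.ne_of_mem_erase hx)
        obtain ⟨l, ⟨hl, hAl⟩, hu⟩ := hex _ hA0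
        obtain ⟨m, z, rfl⟩ := hdec l hl
        have key : ∀ B, a ∉ B → insert a B = A → B = A.erase a := by
          rintro B hB rfl
          rw [Finset.erase_insert hB]
        -- any chain containing A
        have key2 : ∀ l', (∃ m z, m ++ [z] ∈ L ∧ (l' = m ++ [z] ++ [insert a z] ∨
            (m ≠ [] ∧ l' = m.map (insert a)))) → A ∈ l' →
            (A.erase a = z ∧ l' = m ++ [z] ++ [insert a z]) ∨
            (A.erase a ∈ m ∧ l' = m.map (insert a)) := by
          rintro l' ⟨m2, z2, h, rfl | ⟨h1, rfl⟩⟩ hA'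
          · rw [List.mem_append] at hA'
            rcases hA' with hA' | hA'
            · exact absurd haA (hna _ h _ hA')
            · rw [List.mem_singleton] at hA'
              have e := key z2 (hna _ h _ (by simp)) hA'.symm
              have := hu (m2 ++ [z2]) ⟨h, by simp [e]⟩
              obtain ⟨rfl, e2⟩ := List.append_inj' this rfl
              have : z2 = z := by simpa using e2
              subst this
              exact Or.inl ⟨e.symm, rfl⟩
          · rw [List.mem_map] at hA'
            obtain ⟨B, hB, e⟩ := hA'
            have e := key B (hna _ h _ (by simp [hB])) e
            have := hu (m2 ++ [z2]) ⟨h, by simp [← e, hB]⟩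
            obtain ⟨rfl, e2⟩ := List.append_inj' this rfl
            exact Or.inr ⟨e ▸ hB, rfl⟩
        have hz := hnd m z hl
        rw [List.mem_append, List.mem_singleton] at hAl
        rcases hAl with hAl | hAl
        · refine ⟨m.map (insert a), ⟨⟨m, z, hl, Or.inr ⟨List.ne_nil_of_mem hAl, rfl⟩⟩, ?_⟩, ?_⟩
          · rw [List.mem_map]
            exact ⟨_, hAl, Finset.insert_erase haA⟩
          · rintro l' ⟨hl', hAl'⟩
            rcases key2 l' hl' hAl' with ⟨e, -⟩ | ⟨-, e⟩
            · exact absurd (e ▸ hAl) hz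
            · exact e
        · refine ⟨m ++ [z] ++ [insert a z], ⟨⟨m, z, hl, Or.inl rfl⟩, ?_⟩, ?_⟩
          · rw [← hAl, Finset.insert_erase haA]; simp
          · rintro l' ⟨hl', hAl'⟩
            rcases key2 l' hl' hAl' with ⟨-, e⟩ | ⟨e, -⟩
            · exact e
            · exact absurd (hAl ▸ e) hz
      · have hA0 : A ⊆ S := by
          intro x hx
          have := hA hx
          rw [Finset.mem_insert] at this
          exact this.resolve_left (fun h => haA (h ▸ hx))
        obtain ⟨l, ⟨hl, hAl⟩, hu⟩ := hex _ hA0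
        obtain ⟨m, z, rfl⟩ := hdec l hl
        refine ⟨m ++ [z] ++ [insert a z], ⟨⟨m, z, hl, Or.inl rfl⟩,
          List.mem_append_left _ hAl⟩, ?_⟩
        rintro l' ⟨⟨m2, z2, h, rfl | ⟨h1, rfl⟩⟩, hA'⟩
        · rw [List.mem_append] at hA'
          rcases hA' with hA' | hA'
          · have := hu (m2 ++ [z2]) ⟨h, hA'⟩
            obtain ⟨rfl, e2⟩ := List.append_inj' this rfl
            have : z2 = z := by simpa using e2
            rw [this]
          · rw [List.mem_singleton] at hA'
            exact absurd (hA' ▸ Finset.mem_insert_self a z2) haA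
        · rw [List.mem_map] at hA'
          obtain ⟨B, hB, e⟩ := hA'
          exact absurd (e ▸ Finset.mem_insert_self a B) haA
    · rintro l ⟨m, z, h, rfl | ⟨h1, rfl⟩⟩
      · refine (hch _ h).append (by simp) ?_
        intro x hx y hy
        simp at hx hy
        subst hx hy
        exact ⟨Finset.subset_insert _ _, Finset.card_insert_of_notMem (hna _ h _ (by simp))⟩
      · have hc := (hch _ h).left_of_append
        rw [List.isChain_map]
        refine hc.imp_of_mem_imp ?_
        rintro A B hA hB ⟨h3, h4⟩
        refine ⟨Finset.insert_subset_insert _ h3, ?_⟩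
        rw [Finset.card_insert_of_notMem (hna _ h _ (by simp [hB])),
          Finset.card_insert_of_notMem (hna _ h _ (by simp [hA])), h4]
    · rintro l ⟨m, z, h, rfl | ⟨h1, rfl⟩⟩ hne
      · have h5 := hrk _ h (by simp)
        rw [List.getLast_append_singleton, List.head_append_of_ne_nil (by simp),
          Finset.card_insert_of_notMem (hna _ h _ (by simp)), Finset.card_insert_of_notMem ha]
        rw [List.getLast_append_singleton] at h5
        omega
      · have h5 := hrk _ h (by simp)
        rw [List.getLast_append_singleton, List.head_append_of_ne_nil h1] at h5
        have h6 := ((List.isChain_append.1 (hch _ h)).2.2 (m.getLast h1)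
          (by simp [List.getLast?_eq_getLast_of_ne_nil h1]) z (by simp)).2
        rw [List.head_map, List.getLast_map,
          Finset.card_insert_of_notMem (hna _ h _ (by simp)),
          Finset.card_insert_of_notMem (hna _ h _ (by simp)), Finset.card_insert_of_notMem ha]
        omega

/-! ### Block-start labels -/

/-- Start of the interval containing `k`, where `E` is the set of `j` glued to `j - 1`. -/
def lab (E : Finset ℕ) : ℕ → ℕ
  | 0 => 0
  | k + 1 => if k + 1 ∈ E then lab E k else k + 1

lemma lab_le (E : Finset ℕ) (k : ℕ) : lab E k ≤ k := by
  induction k with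
  | zero => simp [lab]
  | succ k ih => rw [lab]; split_ifs <;> omega

lemma lab_of_notMem {E : Finset ℕ} {k : ℕ} (h : k ∉ E) : lab E k = k := by
  cases k with
  | zero => simp [lab]
  | succ k => simp [lab, h]

lemma lab_of_mem {E : Finset ℕ} {k : ℕ} (hk : 1 ≤ k) (h : k ∈ E) : lab E k = lab E (k - 1) := by
  cases k with
  | zero => omega
  | succ k => simp [lab, h]

lemma lab_pos {E : Finset ℕ} (h1 : 1 ∉ E) {k : ℕ} (hk : 1 ≤ k) : 1 ≤ lab E k := by
  induction k with
  | zero => omega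
  | succ k ih =>
    rw [lab]
    split_ifs with h
    · rcases Nat.eq_zero_or_pos k with rfl | h'
      · exact absurd h h1
      · exact ih h'
    · omega

lemma lab_notMem {E : Finset ℕ} (h0 : 0 ∉ E) (k : ℕ) : lab E k ∉ E := by
  induction k with
  | zero => simpa [lab]
  | succ k ih => rw [lab]; split_ifs with h <;> assumption

lemma lab_lab {E E' : Finset ℕ} (h : E ⊆ E') (k : ℕ) : lab E' (lab E k) = lab E' k := by
  induction k with
  | zero => simp [lab]
  | succ k ih =>
    rw [lab]
    split_ifs with h1
    · rw [ih, lab_of_mem (by omega) (h h1)]; simp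
    · rfl

/-- If `c ≤ k` is a block start, then `c ≤ lab k`. -/
lemma le_lab {E : Finset ℕ} {c : ℕ} (hc : c ∉ E) {k : ℕ} (h : c ≤ k) : c ≤ lab E k := by
  induction k with
  | zero => omega
  | succ k ih =>
    rw [lab]
    split_ifs with h1
    · exact ih (by by_contra h2; exact hc (by rwa [show c = k + 1 by omega]))
    · exact h

lemma lab_eq_of_forall {E : Finset ℕ} {k l : ℕ} (hkl : k ≤ l)
    (h : ∀ j, k < j → j ≤ l → j ∈ E) : lab E k = lab E l := by
  induction l, hkl using Nat.le_induction with
  | base => rfl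
  | succ l hl ih =>
    rw [lab, if_pos (h (l + 1) (by omega) le_rfl)]
    exact ih fun j h1 h2 => h j h1 (by omega)

lemma mem_iff_lab {E : Finset ℕ} (hE : ∀ k ∈ E, 2 ≤ k) {k : ℕ} (hk : 2 ≤ k) :
    k ∈ E ↔ lab E k = lab E (k - 1) := by
  constructor
  · exact lab_of_mem (by omega)
  · intro h
    by_contra h'
    rw [lab_of_notMem h'] at h
    have := lab_le E (k - 1)
    omega

/-- The labelling of the plane. -/
noncomputable def glab (E : Finset ℕ) (t : ℕ) (p : ℂ) : ℕ :=
  if p = Complex.I then t else lab E ⌊p.re⌋₊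

lemma natCast_ne_I (k : ℕ) : (k : ℂ) ≠ Complex.I := by
  intro h
  have := congrArg Complex.im h
  simp at this

@[simp] lemma glab_I (E : Finset ℕ) (t : ℕ) : glab E t Complex.I = t := by simp [glab]

@[simp] lemma glab_nat (E : Finset ℕ) (t k : ℕ) : glab E t (k : ℂ) = lab E k := by
  simp [glab, natCast_ne_I]

lemma mem_T {n : ℕ} {p : ℂ} : p ∈ Tconfig n ↔ (∃ k : ℕ, 1 ≤ k ∧ k ≤ n ∧ p = k) ∨ p = Complex.I := by
  simp only [Tconfig, mem_union, mem_image, mem_Icc, mem_singleton]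
  constructor
  · rintro (⟨k, ⟨h1, h2⟩, rfl⟩ | h)
    · exact Or.inl ⟨k, h1, h2, rfl⟩
    · exact Or.inr h
  · rintro (⟨k, h1, h2, rfl⟩ | h)
    · exact Or.inl ⟨k, ⟨h1, h2⟩, rfl⟩
    · exact Or.inr h

lemma nat_mem_T {n k : ℕ} (h1 : 1 ≤ k) (h2 : k ≤ n) : (k : ℂ) ∈ Tconfig n :=
  mem_T.2 (Or.inl ⟨k, h1, h2, rfl⟩)

lemma I_mem_T (n : ℕ) : Complex.I ∈ Tconfig n := mem_T.2 (Or.inr rfl)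

lemma card_T (n : ℕ) : #(Tconfig n) = n + 1 := by
  rw [Tconfig, card_union_of_disjoint, card_image_of_injective _ Nat.cast_injective]
  · simp
  · simp only [disjoint_singleton_right, mem_image, not_exists, not_and]
    intro k _
    exact natCast_ne_I k

/-- Partition by the fibers of a labelling. -/
noncomputable def kerPart (P : Finset ℂ) (g : ℂ → ℕ) : Finpartition P :=
  letI : DecidableRel (Setoid.ker g).r := Classical.decRel _
  Finpartition.ofSetSetoid (Setoid.ker g) P

lemma kerPart_parts (P : Finset ℂ) (g : ℂ → ℕ) :
    (kerPart P g).parts = P.image fun a => P.filter fun b => g a = g b := by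
  rw [kerPart, Finpartition.ofSetSetoid_parts]
  refine Finset.image_congr ?_
  intro a _
  ext b
  simp [Setoid.ker, Function.onFun]

lemma kerPart_card (P : Finset ℂ) (g : ℂ → ℕ) : #(kerPart P g).parts = #(P.image g) := by
  rw [kerPart_parts]
  have : (P.image fun a => P.filter fun b => g a = g b) =
      (P.image g).image fun c => P.filter fun b => c = g b := by
    rw [Finset.image_image]; rfl
  rw [this]
  refine Finset.card_image_of_injOn ?_
  intro c hc d hd h
  simp only [coe_image, Set.mem_image, mem_coe] at hc
  obtain ⟨p, hp, rfl⟩ := hc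
  have : p ∈ P.filter fun b => g p = g b := by simp [hp]
  have h' : (P.filter fun b => g p = g b) = P.filter fun b => d = g b := h
  rw [h'] at this
  exact (mem_filter.1 this).2.symm

lemma kerPart_le {P : Finset ℂ} {g g' : ℂ → ℕ}
    (h : ∀ p ∈ P, ∀ q ∈ P, g p = g q → g' p = g' q) : kerPart P g ≤ kerPart P g' := by
  intro B hB
  rw [kerPart_parts, mem_image] at hB
  obtain ⟨p, hp, rfl⟩ := hB
  refine ⟨P.filter fun b => g' p = g' b, ?_, ?_⟩
  · rw [kerPart_parts]; exact mem_image_of_mem _ hp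
  · intro q hq
    rw [mem_filter] at hq ⊢
    exact ⟨hq.1, h p hp q hq.1 hq.2⟩

lemma kerPart_eq_imp {P : Finset ℂ} {g g' : ℂ → ℕ} (h : kerPart P g = kerPart P g') :
    ∀ p ∈ P, ∀ q ∈ P, g p = g q → g' p = g' q := by
  intro p hp q hq hpq
  have h1 : (P.filter fun b => g p = g b) ∈ (kerPart P g').parts := by
    rw [← h, kerPart_parts]; exact mem_image_of_mem _ hp
  rw [kerPart_parts, mem_image] at h1
  obtain ⟨r, hr, e⟩ := h1
  have hp' : p ∈ P.filter fun b => g p = g b := by simp [hp]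
  have hq' : q ∈ P.filter fun b => g p = g b := by simp [hq, hpq]
  rw [← e, mem_filter] at hp' hq'
  rw [← hp'.2, hq'.2]

lemma eq_kerPart {P : Finset ℂ} (π : Finpartition P) {g : ℂ → ℕ}
    (h : ∀ p ∈ P, ∀ q ∈ P, (q ∈ π.part p ↔ g p = g q)) : kerPart P g = π := by
  have hp : ∀ p ∈ P, (P.filter fun b => g p = g b) = π.part p := by
    intro p hp
    ext q
    rw [mem_filter]
    constructor
    · rintro ⟨h1, h2⟩; exact (h p hp q h1).2 h2
    · intro h1
      have := π.part_subset p h1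
      exact ⟨this, (h p hp q this).1 h1⟩
  ext B
  rw [kerPart_parts, mem_image]
  constructor
  · rintro ⟨p, h1, rfl⟩
    rw [hp p h1]
    exact π.part_mem.2 h1
  · intro hB
    obtain ⟨p, h1⟩ := π.nonempty_of_mem_parts hB
    have h2 := π.le hB h1
    exact ⟨p, h2, by rw [hp p h2]; exact π.part_eq_of_mem hB h1⟩

lemma finpart_eq_of_card {P : Finset ℂ} {π μ : Finpartition P} (h : π ≤ μ)
    (hc : #π.parts ≤ #μ.parts) : π = μ := by
  refine le_antisymm h ?_
  have : ∀ b ∈ μ.parts, ∃ c ∈ π.parts, c ≤ b := fun b => Finpartition.exists_le_of_le h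
  choose! f hf hfb using this
  have hinj : Set.InjOn f μ.parts := by
    intro b hb c hc e
    obtain ⟨x, hx⟩ := π.nonempty_of_mem_parts (hf b hb)
    exact μ.eq_of_mem_parts hb hc (hfb b hb hx) (hfb c hc (e ▸ hx))
  have hsurj : μ.parts.image f = π.parts := by
    refine Finset.eq_of_subset_of_card_le ?_ ?_
    · intro c hc
      obtain ⟨b, hb, rfl⟩ := mem_image.1 hc
      exact hf b hb
    · rw [Finset.card_image_of_injOn hinj]; exact hc
  intro b hb
  refine ⟨f b, hf b hb, ?_⟩
  intro x hx
  have hxP := μ.le hb hx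
  have h1 : π.part x ∈ μ.parts.image f := hsurj ▸ π.part_mem.2 hxP
  obtain ⟨c, hc, e⟩ := mem_image.1 h1
  have hx' : x ∈ f c := e ▸ π.mem_part hxP
  rwa [μ.eq_of_mem_parts hb hc hx (hfb c hc hx')]

lemma covBy_of_le_card {P : Finset ℂ} {x y : NC P} (h : x ≤ y)
    (hc : #x.parts = #y.parts + 1) : x ⋖ y := by
  have key : ∀ u v : NC P, u < v → #v.parts < #u.parts := by
    intro u v huv
    by_contra h1
    exact huv.ne (Subtype.ext (finpart_eq_of_card (π := u.1) (μ := v.1) huv.le (not_lt.1 h1)))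
  constructor
  · refine lt_of_le_of_ne h ?_
    rintro rfl
    omega
  · intro z h1 h2
    have := key _ _ h1
    have := key _ _ h2
    omega

/-! ### Noncrossing partitions from labels -/

/-- Valid data: glued edges `E` and label `t` of the apex. -/
def Valid (n : ℕ) (E : Finset ℕ) (t : ℕ) : Prop :=
  (∀ k ∈ E, 2 ≤ k ∧ k ≤ n) ∧ t ≤ n ∧ t ∉ E

lemma Valid.zero {n E t} (h : Valid n E t) : 0 ∉ E := fun h' => by have := h.1 0 h'; omega
lemma Valid.one {n E t} (h : Valid n E t) : 1 ∉ E := fun h' => by have := h.1 1 h'; omega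

lemma glab_sep {n E t} (hv : Valid n E t) {a b : ℕ} (hab : a < b) (hb : b ∉ E) (hbn : b ≤ n) :
    ∃ K : ℝ, ∀ p ∈ Tconfig n, (glab E t p = a → p.re + K * p.im < b) ∧
      (glab E t p = b → (b : ℝ) ≤ p.re + K * p.im) := by
  refine ⟨if t = b then n + 1 else 0, ?_⟩
  intro p hp
  rcases mem_T.1 hp with ⟨k, h1, h2, rfl⟩ | rfl
  · simp only [glab_nat, Complex.natCast_re, Complex.natCast_im, mul_zero, add_zero, Nat.cast_lt,
      Nat.cast_le]
    constructor
    · intro h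
      by_contra h3
      have := le_lab hb (not_lt.1 h3)
      omega
    · intro h
      have := lab_le E k
      omega
  · simp only [glab_I, Complex.I_re, Complex.I_im]
    constructor
    · intro h
      rw [if_neg (by omega)]
      have : 0 < b := by omega
      simpa using this
    · intro h
      rw [if_pos h]
      have : (b : ℝ) ≤ n := by exact_mod_cast hbn
      linarith

lemma kerPart_noncrossing {n E t} (hv : Valid n E t) :
    IsNoncrossing (kerPart (Tconfig n) (glab E t)) := by
  have hlab : ∀ p ∈ Tconfig n, glab E t p ∉ E ∧ glab E t p ≤ n := by
    intro p hp
    rcases mem_T.1 hp with ⟨k, h1, h2, rfl⟩ | rfl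
    · rw [glab_nat]; exact ⟨lab_notMem hv.zero k, (lab_le E k).trans h2⟩
    · rw [glab_I]; exact ⟨hv.2.2, hv.2.1⟩
  have main : ∀ p ∈ Tconfig n, ∀ q ∈ Tconfig n, glab E t p < glab E t q →
      Disjoint (convexHull ℝ (((Tconfig n).filter fun r => glab E t p = glab E t r : Finset ℂ) : Set ℂ))
        (convexHull ℝ (((Tconfig n).filter fun r => glab E t q = glab E t r : Finset ℂ) : Set ℂ)) := by
    intro p hp q hq hlt
    obtain ⟨K, hK⟩ := glab_sep hv hlt (hlab q hq).1 (hlab q hq).2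
    let f : ℂ → ℝ := fun z => z.re + K * z.im
    have hf : IsLinearMap ℝ f := by
      constructor
      · intro x y; simp only [f, Complex.add_re, Complex.add_im]; ring
      · intro c x
        simp only [f, Complex.smul_re, Complex.smul_im, smul_eq_mul]; ring
    have h1 : convexHull ℝ (((Tconfig n).filter fun r => glab E t p = glab E t r : Finset ℂ) : Set ℂ)
        ⊆ {z | f z < (glab E t q : ℝ)} := by
      refine convexHull_min ?_ (convex_halfSpace_lt hf _)
      intro r hr
      rw [mem_coe, mem_filter] at hr
      exact (hK r hr.1).1 hr.2.symm
    have h2 : convexHull ℝ (((Tconfig n).filter fun r => glab E t q = glab E t r : Finset ℂ) : Set ℂ)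
        ⊆ {z | (glab E t q : ℝ) ≤ f z} := by
      refine convexHull_min ?_ (convex_halfSpace_ge hf _)
      intro r hr
      rw [mem_coe, mem_filter] at hr
      exact (hK r hr.1).2 hr.2.symm
    refine Set.disjoint_of_subset h1 h2 ?_
    rw [Set.disjoint_left]
    intro z hz hz'
    simp only [Set.mem_setOf_eq] at hz hz'
    linarith
  intro B hB C hC hne
  rw [mem_coe, kerPart_parts, mem_image] at hB hC
  obtain ⟨p, hp, rfl⟩ := hB
  obtain ⟨q, hq, rfl⟩ := hC
  rcases lt_trichotomy (glab E t p) (glab E t q) with h | h | h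
  · exact main p hp q hq h
  · rw [h] at hne; exact absurd rfl hne
  · exact (main q hq p hp h).symm

/-- The image of the labelling. -/
lemma image_glab {n E t} (hv : Valid n E t) :
    (Tconfig n).image (glab E t) = insert t (Finset.Icc 1 n \ E) := by
  ext c
  rw [mem_image, mem_insert, mem_sdiff, mem_Icc]
  constructor
  · rintro ⟨p, hp, rfl⟩
    rcases mem_T.1 hp with ⟨k, h1, h2, rfl⟩ | rfl
    · rw [glab_nat]
      exact Or.inr ⟨⟨lab_pos hv.one h1, (lab_le E k).trans h2⟩, lab_notMem hv.zero k⟩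
    · exact Or.inl (glab_I _ _)
  · rintro (rfl | ⟨⟨h1, h2⟩, h3⟩)
    · exact ⟨_, I_mem_T n, glab_I _ _⟩
    · exact ⟨c, nat_mem_T h1 h2, by rw [glab_nat, lab_of_notMem h3]⟩

lemma card_kerPart {n E t} (hv : Valid n E t) :
    #(kerPart (Tconfig n) (glab E t)).parts + #E = if t = 0 then n + 1 else n := by
  rw [kerPart_card, image_glab hv]
  have hsub : E ⊆ Finset.Icc 1 n := by
    intro k hk
    have := hv.1 k hk
    rw [mem_Icc]; omega
  have hc := Finset.card_sdiff_add_card_eq_card hsub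
  rw [Nat.card_Icc] at hc
  split_ifs with h
  · subst h
    rw [card_insert_of_notMem (by simp)]
    omega
  · rw [insert_eq_of_mem]
    · omega
    · rw [mem_sdiff, mem_Icc]
      have := hv.2
      exact ⟨by omega, this.2⟩

lemma kerPart_mono {n E t E' t'} (hv : Valid n E t) (hv' : Valid n E' t') (h : E ⊆ E')
    (ht : t = 0 ∨ t = t') :
    kerPart (Tconfig n) (glab E t) ≤ kerPart (Tconfig n) (glab E' t') := by
  have key : ∀ k, 1 ≤ k → t = lab E k → t' = lab E' k := by
    intro k hk e
    have := lab_pos hv.one hk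
    rcases ht with rfl | rfl
    · omega
    · rw [← lab_lab h k, ← e, lab_of_notMem hv'.2.2]
  refine kerPart_le ?_
  intro p hp q hq hpq
  rcases mem_T.1 hp with ⟨k, h1, h2, rfl⟩ | rfl <;> rcases mem_T.1 hq with ⟨l, h3, h4, rfl⟩ | rfl
  · simp only [glab_nat] at hpq ⊢
    rw [← lab_lab h k, hpq, lab_lab h]
  · simp only [glab_nat, glab_I] at hpq ⊢
    exact (key k h1 hpq.symm).symm
  · simp only [glab_nat, glab_I] at hpq ⊢
    exact key l h3 hpq
  · rfl

lemma kerPart_inj {n E t E' t'} (hv : Valid n E t) (hv' : Valid n E' t')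
    (h : kerPart (Tconfig n) (glab E t) = kerPart (Tconfig n) (glab E' t')) :
    E = E' ∧ t = t' := by
  have main : ∀ {E t E' t'}, Valid n E t → Valid n E' t' →
      kerPart (Tconfig n) (glab E t) = kerPart (Tconfig n) (glab E' t') → E ⊆ E' := by
    intro E t E' t' hv hv' h k hk
    have hk2 := hv.1 k hk
    rw [mem_iff_lab (fun k hk => (hv'.1 k hk).1) hk2.1]
    have := kerPart_eq_imp h k (nat_mem_T (by omega) (by omega)) ((k - 1 : ℕ) : ℂ)
      (nat_mem_T (by omega) (by omega))
    rw [glab_nat, glab_nat, glab_nat, glab_nat] at this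
    exact this (lab_of_mem (by omega) hk)
  obtain rfl : E = E' := Finset.Subset.antisymm (main hv hv' h) (main hv' hv h.symm)
  refine ⟨rfl, ?_⟩
  have main2 : ∀ {t t'}, Valid n E t → Valid n E t' →
      kerPart (Tconfig n) (glab E t) = kerPart (Tconfig n) (glab E t') → t ≠ 0 → t = t' := by
    intro t t' hv hv' h h0
    have := kerPart_eq_imp h _ (I_mem_T n) (t : ℂ) (nat_mem_T (by omega) hv.2.1)
    rw [glab_nat, glab_nat, glab_I, glab_I, lab_of_notMem hv.2.2] at this
    exact (this rfl).symm
  by_cases h0 : t = 0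
  · by_cases h0' : t' = 0
    · rw [h0, h0']
    · exact (main2 hv' hv h.symm h0').symm
  · exact main2 hv hv' h h0

lemma nat_mem_convexHull {s : Set ℂ} {k j l : ℕ} (hk : (k : ℂ) ∈ s) (hl : (l : ℂ) ∈ s)
    (hkj : k < j) (hjl : j < l) : (j : ℂ) ∈ convexHull ℝ s := by
  have h1 := subset_convexHull ℝ s hk
  have h2 := subset_convexHull ℝ s hl
  have hpos : (0 : ℝ) < (l : ℝ) - k := by
    have : (k : ℝ) < l := by exact_mod_cast hkj.trans hjl
    linarith
  have a1 : (k : ℝ) < j := by exact_mod_cast hkj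
  have a2 : (j : ℝ) < l := by exact_mod_cast hjl
  have h3 := (convex_convexHull ℝ s) h1 h2 (a := ((l : ℝ) - j) / (l - k))
    (b := ((j : ℝ) - k) / (l - k)) (div_nonneg (by linarith) hpos.le)
    (div_nonneg (by linarith) hpos.le) (by field_simp; ring)
  convert h3 using 1
  apply Complex.ext
  · rw [Complex.add_re, Complex.smul_re, Complex.smul_re]
    simp only [Complex.natCast_re, smul_eq_mul]
    field_simp
    ring
  · rw [Complex.add_im, Complex.smul_im, Complex.smul_im]
    simp

lemma exists_data {n : ℕ} (π : NC (Tconfig n)) :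
    ∃ E t, Valid n E t ∧ kerPart (Tconfig n) (glab E t) = π.1 := by
  classical
  obtain ⟨π, hπ⟩ := π
  simp only
  have hsymm : ∀ {p q}, q ∈ π.part p → p ∈ π.part q := by
    intro p q h
    rw [Finpartition.mem_part_iff_exists] at h ⊢
    obtain ⟨B, h1, h2, h3⟩ := h
    exact ⟨B, h1, h3, h2⟩
  have htrans : ∀ {p q r}, q ∈ π.part p → r ∈ π.part q → r ∈ π.part p := by
    intro p q r h h'
    have hq := π.part_subset p h
    have hp : p ∈ Tconfig n := π.part_nonempty.1 ⟨q, h⟩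
    rw [← (π.mem_part_iff_part_eq_part hq hp).1 h]
    exact h'
  have hconv : ∀ k j l : ℕ, 1 ≤ k → l ≤ n → k < j → j < l → (l : ℂ) ∈ π.part k →
      (j : ℂ) ∈ π.part k := by
    intro k j l h1 h2 h3 h4 h5
    have hk := nat_mem_T h1 (show k ≤ n by omega)
    have hj := nat_mem_T (show 1 ≤ j by omega) (show j ≤ n by omega)
    by_contra hcon
    have hne : π.part k ≠ π.part j := fun e => hcon (e ▸ π.mem_part hj)
    have hd := hπ (π.part_mem.2 hk) (π.part_mem.2 hj) hne
    simp only [Set.disjoint_left] at hd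
    exact hd (nat_mem_convexHull (mem_coe.2 (π.mem_part hk)) (mem_coe.2 h5) h3 h4)
      (subset_convexHull ℝ _ (mem_coe.2 (π.mem_part hj)))
  let E : Finset ℕ := (Finset.Icc 2 n).filter fun k => (k : ℂ) ∈ π.part ((k - 1 : ℕ) : ℂ)
  have hE : ∀ k, k ∈ E ↔ (2 ≤ k ∧ k ≤ n) ∧ (k : ℂ) ∈ π.part ((k - 1 : ℕ) : ℂ) := by
    intro k; simp only [E, mem_filter, mem_Icc]
  have ht : ∃ t, t ≤ n ∧ t ∉ E ∧ (t ≠ 0 → (t : ℂ) ∈ π.part Complex.I) ∧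
      (t = 0 → ∀ k, 1 ≤ k → k ≤ n → (k : ℂ) ∉ π.part Complex.I) := by
    by_cases hex : ∃ k : ℕ, 1 ≤ k ∧ k ≤ n ∧ (k : ℂ) ∈ π.part Complex.I
    · have hs := Nat.find_spec hex
      refine ⟨Nat.find hex, hs.2.1, ?_, fun _ => hs.2.2, fun h => by omega⟩
      intro h
      rw [hE] at h
      exact Nat.find_min hex (m := Nat.find hex - 1) (by omega)
        ⟨by omega, by omega, htrans hs.2.2 (hsymm h.2)⟩
    · push Not at hex
      refine ⟨0, by omega, ?_, fun h => absurd rfl h, fun _ => hex⟩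
      rw [hE]; omega
  obtain ⟨t, ht1, ht2, ht3, ht4⟩ := ht
  have hv : Valid n E t := ⟨fun k hk => ((hE k).1 hk).1, ht1, ht2⟩
  refine ⟨E, t, hv, eq_kerPart π ?_⟩
  have hlab : ∀ k : ℕ, 1 ≤ k → k ≤ n → (k : ℂ) ∈ π.part (lab E k) := by
    intro k
    induction k with
    | zero => omega
    | succ k ih =>
      intro h1 h2
      rw [lab]
      split_ifs with h
      · have h' := (hE _).1 h
        exact htrans (ih (by omega) (by omega)) (by simpa using h'.2)
      · exact π.mem_part (nat_mem_T h1 h2)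
  have hmon : ∀ k l : ℕ, 1 ≤ k → l ≤ n → k ≤ l → (l : ℂ) ∈ π.part k → lab E k = lab E l := by
    intro k l h1 h2 h3 h4
    refine lab_eq_of_forall h3 ?_
    have hall : ∀ j, k ≤ j → j ≤ l → (j : ℂ) ∈ π.part k := by
      intro j h5 h6
      rcases h5.eq_or_lt with rfl | h5
      · exact π.mem_part (nat_mem_T h1 (by omega))
      rcases h6.eq_or_lt with rfl | h6
      · exact h4
      exact hconv k j l h1 h2 h5 h6 h4
    intro j h5 h6
    rw [hE]
    exact ⟨by omega, htrans (hsymm (hall (j - 1) (by omega) (by omega))) (hall j h5.le h6)⟩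
  have hkl : ∀ k l : ℕ, 1 ≤ k → k ≤ n → 1 ≤ l → l ≤ n →
      ((l : ℂ) ∈ π.part k ↔ lab E k = lab E l) := by
    intro k l h1 h2 h3 h4
    constructor
    · intro h
      rcases le_total k l with h5 | h5
      · exact hmon k l h1 h4 h5 h
      · exact (hmon l k h3 h2 h5 (hsymm h)).symm
    · intro h
      have := hlab l h3 h4
      rw [← h] at this
      exact htrans (hsymm (hlab k h1 h2)) this
  have hI : ∀ k : ℕ, 1 ≤ k → k ≤ n → ((k : ℂ) ∈ π.part Complex.I ↔ t = lab E k) := by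
    intro k h1 h2
    constructor
    · intro h
      have h0 : t ≠ 0 := fun h0 => ht4 h0 k h1 h2 h
      have := (hkl t k (by omega) ht1 h1 h2).1 (htrans (hsymm (ht3 h0)) h)
      rwa [lab_of_notMem ht2] at this
    · intro h
      have h0 := lab_pos hv.one h1
      have := hlab k h1 h2
      rw [← h] at this
      exact htrans (ht3 (by omega)) this
  intro p hp q hq
  rcases mem_T.1 hp with ⟨k, h1, h2, rfl⟩ | rfl <;> rcases mem_T.1 hq with ⟨l, h3, h4, rfl⟩ | rfl
  · simp only [glab_nat]; exact hkl k l h1 h2 h3 h4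
  · simp only [glab_nat, glab_I]
    rw [eq_comm, ← hI k h1 h2]
    exact ⟨hsymm, hsymm⟩
  · simp only [glab_nat, glab_I]; exact hI l h3 h4
  · exact ⟨fun _ => rfl, fun _ => π.mem_part (I_mem_T n)⟩

/-! ### Decomposition into Boolean pieces -/

/-- Ground set of the `i`-th Boolean piece. -/
def ground (n i : ℕ) : Finset ℕ := if i = 1 then Finset.Icc 1 n else (Finset.Icc 2 n).erase i

/-- Glued edges of an element of the `i`-th piece. -/
def pieceE (i : ℕ) (A : Finset ℕ) : Finset ℕ := if i = 1 then A.erase 1 else A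

/-- Apex label of an element of the `i`-th piece. -/
def pieceT (i : ℕ) (A : Finset ℕ) : ℕ := if i = 1 then (if 1 ∈ A then 1 else 0) else i

lemma piece_valid {n i : ℕ} {A : Finset ℕ} (hi : i = 1 ∨ (2 ≤ i ∧ i ≤ n)) (hA : A ⊆ ground n i) :
    Valid n (pieceE i A) (pieceT i A) := by
  by_cases h : i = 1
  · subst h
    simp only [ground, pieceE, pieceT, if_true] at *
    refine ⟨?_, ?_, ?_⟩
    · intro k hk
      rw [mem_erase] at hk
      have := mem_Icc.1 (hA hk.2)
      omega
    · split_ifs with h1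
      · have := mem_Icc.1 (hA h1); omega
      · omega
    · split_ifs with h1
      · simp
      · intro h2
        have := mem_Icc.1 (hA (mem_of_mem_erase h2)); omega
  · have hi' := hi.resolve_left h
    simp only [ground, pieceE, pieceT, if_neg h] at *
    refine ⟨?_, hi'.2, ?_⟩
    · intro k hk
      exact mem_Icc.1 (mem_of_mem_erase (hA hk))
    · intro h1
      exact ne_of_mem_erase (hA h1) rfl

open Classical in
/-- The `i`-th piece, with a junk value off its domain. -/
noncomputable def piece (n i : ℕ) (A : Finset ℕ) : NC (Tconfig n) :=
  if h : Valid n (pieceE i A) (pieceT i A) then ⟨_, kerPart_noncrossing h⟩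
  else ⟨_, kerPart_noncrossing (n := n) (E := ∅) (t := 0) ⟨by simp, by omega, by simp⟩⟩

lemma piece_val {n i : ℕ} {A : Finset ℕ} (hi : i = 1 ∨ (2 ≤ i ∧ i ≤ n)) (hA : A ⊆ ground n i) :
    (piece n i A).1 = kerPart (Tconfig n) (glab (pieceE i A) (pieceT i A)) := by
  rw [piece, dif_pos (piece_valid hi hA)]

lemma piece_card {n i : ℕ} {A : Finset ℕ} (hi : i = 1 ∨ (2 ≤ i ∧ i ≤ n)) (hA : A ⊆ ground n i) :
    #(piece n i A).parts + #A = if i = 1 then n + 1 else n := by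
  have h := card_kerPart (piece_valid hi hA)
  rw [NC.parts, piece_val hi hA]
  by_cases h1 : i = 1
  · subst h1
    by_cases h2 : 1 ∈ A
    · have := Finset.card_erase_add_one h2
      simp [pieceE, pieceT, h2] at h ⊢
      omega
    · simpa [pieceE, pieceT, h2] using h
  · have : i ≠ 0 := by omega
    simpa [pieceE, pieceT, h1, this] using h

lemma piece_cov {n i : ℕ} {A B : Finset ℕ} (hi : i = 1 ∨ (2 ≤ i ∧ i ≤ n)) (hA : A ⊆ ground n i)
    (hB : B ⊆ ground n i) (hAB : A ⊆ B) (hc : #B = #A + 1) : piece n i A ⋖ piece n i B := by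
  refine covBy_of_le_card ?_ ?_
  · rw [← Subtype.coe_le_coe, piece_val hi hA, piece_val hi hB]
    refine kerPart_mono (piece_valid hi hA) (piece_valid hi hB) ?_ ?_
    · unfold pieceE
      split_ifs
      · exact Finset.erase_subset_erase _ hAB
      · exact hAB
    · unfold pieceT
      split_ifs with h1 h2 h3 h3 <;> simp
      exact h3 (hAB h2)
  · have h1 := piece_card hi hA
    have h2 := piece_card hi hB
    omega

lemma piece_inj {n i j : ℕ} {A B : Finset ℕ} (hi : i = 1 ∨ (2 ≤ i ∧ i ≤ n))
    (hj : j = 1 ∨ (2 ≤ j ∧ j ≤ n)) (hA : A ⊆ ground n i)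
    (hB : B ⊆ ground n j) (h : piece n i A = piece n j B) : i = j ∧ A = B := by
  have h' := congrArg Subtype.val h
  rw [piece_val hi hA, piece_val hj hB] at h'
  obtain ⟨h1, h2⟩ := kerPart_inj (piece_valid hi hA) (piece_valid hj hB) h'
  have hij : i = j := by
    unfold pieceT at h2
    split_ifs at h2 <;> omega
  subst hij
  refine ⟨rfl, ?_⟩
  unfold pieceE at h1
  unfold pieceT at h2
  by_cases hi1 : i = 1
  · simp only [if_pos hi1] at h1 h2
    by_cases hA1 : 1 ∈ A
    · have hB1 : 1 ∈ B := by by_contra hB1; simp [hA1, hB1] at h2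
      rw [← Finset.insert_erase hA1, h1, Finset.insert_erase hB1]
    · have hB1 : 1 ∉ B := by intro hB1; simp [hA1, hB1] at h2
      rwa [Finset.erase_eq_of_notMem hA1, Finset.erase_eq_of_notMem hB1] at h1
  · simpa only [if_neg hi1] using h1

lemma piece_surj {n : ℕ} (x : NC (Tconfig n)) :
    ∃ i A, (i = 1 ∨ (2 ≤ i ∧ i ≤ n)) ∧ A ⊆ ground n i ∧ piece n i A = x := by
  obtain ⟨E, t, hv, e⟩ := exists_data x
  have hE1 : E ⊆ Finset.Icc 2 n := fun k hk => mem_Icc.2 (hv.1 k hk)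
  have hE2 : E ⊆ Finset.Icc 1 n := hE1.trans (Finset.Icc_subset_Icc (by omega) le_rfl)
  have key : ∀ i A, (i = 1 ∨ (2 ≤ i ∧ i ≤ n)) → A ⊆ ground n i → pieceE i A = E →
      pieceT i A = t → ∃ i A, (i = 1 ∨ (2 ≤ i ∧ i ≤ n)) ∧ A ⊆ ground n i ∧ piece n i A = x := by
    intro i A h1 h2 h3 h4
    exact ⟨i, A, h1, h2, Subtype.ext (by rw [piece_val h1 h2, h3, h4, e])⟩
  have h1E := hv.one
  have htn := hv.2.1
  rcases Nat.lt_or_ge t 2 with h | h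
  · rcases Nat.eq_zero_or_pos t with h0 | h0
    · refine key 1 E (Or.inl rfl) (by simpa [ground] using hE2) ?_ ?_
      · simp [pieceE, h1E]
      · simp [pieceT, h1E, h0]
    · have h1 : t = 1 := by omega
      refine key 1 (insert 1 E) (Or.inl rfl) ?_ ?_ ?_
      · simp only [ground, if_true]
        exact Finset.insert_subset (mem_Icc.2 (by omega)) hE2
      · simp [pieceE, h1E]
      · simp [pieceT, h1]
  · have h1 : t ≠ 1 := by omega
    refine key t E (Or.inr ⟨h, htn⟩) ?_ ?_ ?_
    · simp only [ground, if_neg h1]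
      exact Finset.subset_erase.2 ⟨hE1, hv.2.2⟩
    · simp [pieceE, h1]
    · simp [pieceT, h1]

lemma ground_card {n i : ℕ} (hi : i = 1 ∨ (2 ≤ i ∧ i ≤ n)) :
    #(ground n i) + (if i = 1 then 0 else 2) = n := by
  by_cases h : i = 1
  · simp [ground, h]
  · have := hi.resolve_left h
    simp only [ground, if_neg h]
    rw [Finset.card_erase_of_mem (mem_Icc.2 this), Nat.card_Icc]
    omega

/-- For every `n ≥ 0`, `NC(T_n)` admits a symmetric chain decomposition: it can be
partitioned into saturated chains (consecutive elements are covering pairs), each of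
which satisfies `ρ(min C) + ρ(max C) = |T_n| - 1 = n`, where
`ρ(π) = |T_n| - #blocks(π)`. -/
theorem nc_T_symmetric_chain_decomposition (n : ℕ) :
    ∃ chains : Set (List (NC (Tconfig n))),
      [] ∉ chains ∧
      (∀ x : NC (Tconfig n), ∃! l, l ∈ chains ∧ x ∈ l) ∧
      (∀ l ∈ chains, List.Chain' (· ⋖ ·) l) ∧
      ∀ l ∈ chains, ∀ h : l ≠ [],
        ((Tconfig n).card - (l.head h).parts.card) +
            ((Tconfig n).card - (l.getLast h).parts.card) = n := by
  choose L h0 hsub hex hch hrk using fun i => bool_scd (ground n i)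
  refine ⟨{l | ∃ i, (i = 1 ∨ (2 ≤ i ∧ i ≤ n)) ∧ ∃ m ∈ L i, l = m.map (piece n i)}, ?_, ?_, ?_, ?_⟩
  · rintro ⟨i, hi, m, hm, e⟩
    have : m = [] := by simpa using e.symm
    exact h0 i (this ▸ hm)
  · intro x
    obtain ⟨i, A, hi, hA, rfl⟩ := piece_surj x
    obtain ⟨m, ⟨hm, hAm⟩, hu⟩ := hex i A hA
    refine ⟨m.map (piece n i), ⟨⟨i, hi, m, hm, rfl⟩, List.mem_map_of_mem hAm⟩, ?_⟩
    rintro l ⟨⟨j, hj, m', hm', rfl⟩, hx⟩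
    obtain ⟨B, hB, e⟩ := List.mem_map.1 hx
    obtain ⟨rfl, rfl⟩ := piece_inj hj hi (hsub j m' hm' B hB) hA e
    rw [hu m' ⟨hm', hB⟩]
  · rintro l ⟨i, hi, m, hm, rfl⟩
    show List.IsChain _ _
    rw [List.isChain_map]
    refine (hch i m hm).imp_of_mem_imp ?_
    rintro A B hA hB ⟨h1, h2⟩
    exact piece_cov hi (hsub i m hm A hA) (hsub i m hm B hB) h1 h2
  · rintro l ⟨i, hi, m, hm, rfl⟩ h
    have hne : m ≠ [] := by simpa using h
    have h1 := hrk i m hm hne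
    have h2 := piece_card hi (hsub i m hm _ (List.head_mem hne))
    have h3 := piece_card hi (hsub i m hm _ (List.getLast_mem hne))
    have h4 := ground_card hi
    rw [List.head_map, List.getLast_map, card_T]
    split_ifs at h2 h3 h4 <;> omega
end

section
/- Let t_n denote the cardinality of NC(T_n). For every n ≥ 2, t_n = (n + 3)·2^{n−2}. -/
open Finset

namespace NCT

lemma sum_card_powerset_two (s : Finset ℕ) :
    2 * ∑ D ∈ s.powerset, D.card = s.card * 2 ^ s.card := by
  induction s using Finset.induction_on with
  | empty => simp
  | insert a s ha ih =>
    rw [Finset.sum_powerset_insert ha, Finset.card_insert_of_notMem ha]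
    have h : ∑ t ∈ s.powerset, (insert a t).card = ∑ t ∈ s.powerset, (t.card + 1) := by
      apply Finset.sum_congr rfl
      intro t ht
      rw [Finset.card_insert_of_notMem]
      exact fun h => ha (Finset.mem_powerset.1 ht h)
    rw [h, Finset.sum_add_distrib]
    simp only [Finset.sum_const, Finset.card_powerset, smul_eq_mul, mul_one]
    rw [mul_add, mul_add, ih]
    ring

/-- codes: right endpoints of intervals (other than `n`), and the marked endpoint (or `0`). -/
def codes (n : ℕ) : Finset (Σ _ : Finset ℕ, ℕ) :=
  (Finset.Icc 1 (n - 1)).powerset.sigma fun D => insert 0 (insert n D)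

lemma card_codes (n : ℕ) (hn : 2 ≤ n) : (codes n).card = (n + 3) * 2 ^ (n - 2) := by
  rw [codes, Finset.card_sigma]
  have h : ∀ D ∈ (Finset.Icc 1 (n - 1)).powerset,
      (insert 0 (insert n D) : Finset ℕ).card = D.card + 2 := by
    intro D hD
    have hD' := Finset.mem_powerset.1 hD
    rw [Finset.card_insert_of_notMem, Finset.card_insert_of_notMem]
    · intro h
      have := Finset.mem_Icc.1 (hD' h)
      omega
    · intro h
      rcases Finset.mem_insert.1 h with h | h
      · omega
      · have := Finset.mem_Icc.1 (hD' h)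
        omega
  rw [Finset.sum_congr rfl h, Finset.sum_add_distrib]
  have h2 := sum_card_powerset_two (Finset.Icc 1 (n - 1))
  obtain ⟨k, rfl⟩ : ∃ k, n = k + 2 := ⟨n - 2, by omega⟩
  simp only [Finset.sum_const, Finset.card_powerset, smul_eq_mul, Nat.card_Icc] at h2 ⊢
  simp only [Nat.add_sub_cancel, show k + 2 - 1 = k + 1 by omega] at h2 ⊢
  rw [pow_succ] at h2 ⊢
  nlinarith

/-- the least element of `insert n D` that is at least `k`. -/
noncomputable def en (n : ℕ) (D : Finset ℕ) (k : ℕ) : ℕ :=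
  sInf {j | j ∈ insert n D ∧ k ≤ j}

lemma en_spec {n : ℕ} (D : Finset ℕ) {k : ℕ} (hk : k ≤ n) :
    en n D k ∈ insert n D ∧ k ≤ en n D k :=
  Nat.sInf_mem (s := {j | j ∈ insert n D ∧ k ≤ j}) ⟨n, by simp, hk⟩

lemma en_le {n : ℕ} {D : Finset ℕ} {k j : ℕ} (hj : j ∈ insert n D) (hk : k ≤ j) :
    en n D k ≤ j := Nat.sInf_le ⟨hj, hk⟩

lemma en_self {n : ℕ} {D : Finset ℕ} {j : ℕ} (hj : j ∈ insert n D) (hn : j ≤ n) :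
    en n D j = j := le_antisymm (en_le hj le_rfl) (en_spec D hn).2

lemma en_succ {n : ℕ} {D : Finset ℕ} {k : ℕ} (hk : k < n) :
    en n D k = en n D (k + 1) ↔ k ∉ D := by
  constructor
  · intro h hD
    have h1 := en_self (Finset.mem_insert_of_mem hD : k ∈ insert n D) hk.le
    have h2 := (en_spec D (Nat.succ_le_of_lt hk)).2
    simp only [Nat.succ_eq_add_one] at h2
    omega
  · intro hD
    unfold en
    congr 1
    ext j
    simp only [Set.mem_ofPred_eq, Finset.mem_insert]
    constructor
    · rintro ⟨h1, h2⟩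
      refine ⟨h1, ?_⟩
      rcases h1 with h1 | h1
      · omega
      · rcases h2.eq_or_lt with h3 | h3
        · subst h3
          exact absurd h1 hD
        · exact h3
    · rintro ⟨h1, h2⟩
      exact ⟨h1, by omega⟩

/-- the label of a point. -/
noncomputable def lab (n : ℕ) (D : Finset ℕ) (m : ℕ) (z : ℂ) : ℕ :=
  if z = Complex.I then m else en n D ⌊z.re⌋₊

lemma cast_ne_I (k : ℕ) : (k : ℂ) ≠ Complex.I := by
  intro h
  have := congrArg Complex.im h
  simp at this

@[simp] lemma lab_I (n : ℕ) (D : Finset ℕ) (m : ℕ) : lab n D m Complex.I = m := by simp [lab]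

@[simp] lemma lab_cast (n : ℕ) (D : Finset ℕ) (m k : ℕ) : lab n D m (k : ℂ) = en n D k := by
  simp [lab, cast_ne_I]

lemma mem_T {n : ℕ} {z : ℂ} :
    z ∈ Tconfig n ↔ z = Complex.I ∨ ∃ k : ℕ, 1 ≤ k ∧ k ≤ n ∧ z = k := by
  simp only [Tconfig, Finset.mem_union, Finset.mem_image, Finset.mem_Icc, Finset.mem_singleton]
  constructor
  · rintro (⟨k, ⟨h1, h2⟩, rfl⟩ | h)
    · exact Or.inr ⟨k, h1, h2, rfl⟩
    · exact Or.inl h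
  · rintro (h | ⟨k, h1, h2, rfl⟩)
    · exact Or.inr h
    · exact Or.inl ⟨k, ⟨h1, h2⟩, rfl⟩

lemma I_mem_T (n : ℕ) : Complex.I ∈ Tconfig n := mem_T.2 (Or.inl rfl)

lemma cast_mem_T {n k : ℕ} (h1 : 1 ≤ k) (h2 : k ≤ n) : (k : ℂ) ∈ Tconfig n :=
  mem_T.2 (Or.inr ⟨k, h1, h2, rfl⟩)

open Classical in
/-- the partition by labels. -/
noncomputable def part (n : ℕ) (D : Finset ℕ) (m : ℕ) : Finpartition (Tconfig n) :=
  Finpartition.ofSetSetoid (Setoid.ker (lab n D m)) (Tconfig n)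

lemma mem_parts {n : ℕ} {D : Finset ℕ} {m : ℕ} {B : Finset ℂ} (hB : B ∈ (part n D m).parts) :
    ∃ β : ℕ, ∀ z, z ∈ B ↔ z ∈ Tconfig n ∧ lab n D m z = β := by
  classical
  simp only [part, Finpartition.ofSetSetoid, Finset.mem_image] at hB
  obtain ⟨a, ha, rfl⟩ := hB
  refine ⟨lab n D m a, fun z => ?_⟩
  simp [eq_comm]

lemma mem_part {n : ℕ} {D : Finset ℕ} {m : ℕ} {a b : ℂ} (ha : a ∈ Tconfig n)
    (hb : b ∈ Tconfig n) :
    b ∈ (part n D m).part a ↔ lab n D m a = lab n D m b := by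
  obtain ⟨β, hβ⟩ := mem_parts ((part n D m).part_mem.2 ha)
  have h1 := ((hβ a).1 ((part n D m).mem_part ha)).2
  rw [hβ, h1]
  simp [hb, eq_comm]

lemma convex_gt (b : ℝ) : Convex ℝ {z : ℂ | 0 < z.im ∨ (z.im = 0 ∧ b < z.re)} := by
  rw [convex_iff_forall_pos]
  intro x hx y hy s t hs ht hst
  simp only [Set.mem_ofPred_eq, Complex.add_im, Complex.smul_im, Complex.add_re, Complex.smul_re,
    smul_eq_mul] at *
  rcases hx with hx | ⟨hx, hx'⟩ <;> rcases hy with hy | ⟨hy, hy'⟩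
  · left; positivity
  · left; rw [hy]; nlinarith
  · left; rw [hx]; nlinarith
  · right
    refine ⟨by rw [hx, hy]; ring, ?_⟩
    have : b = s * b + t * b := by rw [← add_mul, hst, one_mul]
    nlinarith

lemma convex_le (b : ℝ) : Convex ℝ {z : ℂ | 0 < z.im ∨ (z.im = 0 ∧ z.re ≤ b)} := by
  rw [convex_iff_forall_pos]
  intro x hx y hy s t hs ht hst
  simp only [Set.mem_ofPred_eq, Complex.add_im, Complex.smul_im, Complex.add_re, Complex.smul_re,
    smul_eq_mul] at *
  rcases hx with hx | ⟨hx, hx'⟩ <;> rcases hy with hy | ⟨hy, hy'⟩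
  · left; positivity
  · left; rw [hy]; nlinarith
  · left; rw [hx]; nlinarith
  · right
    refine ⟨by rw [hx, hy]; ring, ?_⟩
    have : b = s * b + t * b := by rw [← add_mul, hst, one_mul]
    nlinarith

lemma convex_gt0 (b : ℝ) : Convex ℝ {z : ℂ | z.im = 0 ∧ b < z.re} := by
  rw [convex_iff_forall_pos]
  intro x hx y hy s t hs ht hst
  simp only [Set.mem_ofPred_eq, Complex.add_im, Complex.smul_im, Complex.add_re, Complex.smul_re,
    smul_eq_mul] at *
  refine ⟨by rw [hx.1, hy.1]; ring, ?_⟩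
  have : b = s * b + t * b := by rw [← add_mul, hst, one_mul]
  nlinarith [hx.2, hy.2]

lemma convex_le0 (b : ℝ) : Convex ℝ {z : ℂ | z.im = 0 ∧ z.re ≤ b} := by
  rw [convex_iff_forall_pos]
  intro x hx y hy s t hs ht hst
  simp only [Set.mem_ofPred_eq, Complex.add_im, Complex.smul_im, Complex.add_re, Complex.smul_re,
    smul_eq_mul] at *
  refine ⟨by rw [hx.1, hy.1]; ring, ?_⟩
  have : b = s * b + t * b := by rw [← add_mul, hst, one_mul]
  nlinarith [hx.2, hy.2]

lemma disj_aux {n : ℕ} {D : Finset ℕ} {m β γ : ℕ} {B C : Finset ℂ}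
    (hm : m ∈ insert 0 (insert n D))
    (hB : ∀ z, z ∈ B ↔ z ∈ Tconfig n ∧ lab n D m z = β)
    (hC : ∀ z, z ∈ C ↔ z ∈ Tconfig n ∧ lab n D m z = γ)
    (hBn : B.Nonempty) (hCn : C.Nonempty) (hne : β ≠ γ) (hβ : β ≠ m) :
    Disjoint (convexHull ℝ (B : Set ℂ)) (convexHull ℝ (C : Set ℂ)) := by
  have hB' : ∀ z ∈ B, ∃ k : ℕ, 1 ≤ k ∧ k ≤ n ∧ z = k ∧ en n D k = β := by
    intro z hz
    obtain ⟨h1, h2⟩ := (hB z).1 hz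
    rcases mem_T.1 h1 with rfl | ⟨k, h3, h4, rfl⟩
    · simp at h2; omega
    · exact ⟨k, h3, h4, rfl, by simpa using h2⟩
  have hC' : ∀ z ∈ C, z = Complex.I ∨ ∃ k : ℕ, 1 ≤ k ∧ k ≤ n ∧ z = k ∧ en n D k = γ := by
    intro z hz
    obtain ⟨h1, h2⟩ := (hC z).1 hz
    rcases mem_T.1 h1 with rfl | ⟨k, h3, h4, rfl⟩
    · exact Or.inl rfl
    · exact Or.inr ⟨k, h3, h4, rfl, by simpa using h2⟩
  rcases lt_or_gt_of_ne hne with hlt | hlt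
  · refine Disjoint.mono (convexHull_min ?_ (convex_le0 β)) (convexHull_min ?_ (convex_gt β)) ?_
    · intro z hz
      obtain ⟨k, h1, h2, rfl, h3⟩ := hB' z hz
      have := (en_spec D h2).2
      simp only [Set.mem_ofPred_eq, Complex.natCast_im, Complex.natCast_re, true_and]
      exact_mod_cast h3 ▸ this
    · intro z hz
      rcases hC' z hz with rfl | ⟨k, h1, h2, rfl, h3⟩
      · simp
      · right
        simp only [Complex.natCast_im, Complex.natCast_re, true_and]
        by_contra hcon
        have hcon : k ≤ β := by exact_mod_cast not_lt.1 hcon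
        obtain ⟨z, hz⟩ := hBn
        obtain ⟨l, _, h5, rfl, h6⟩ := hB' z hz
        have := en_le (h6 ▸ (en_spec D h5).1 : β ∈ insert n D) hcon
        omega
    · rw [Set.disjoint_left]
      rintro z ⟨h1, h2⟩ (h3 | ⟨h3, h4⟩)
      · exact h3.ne' h1
      · exact absurd h4 (not_lt.2 h2)
  · refine Disjoint.mono (convexHull_min ?_ (convex_gt0 γ)) (convexHull_min ?_ (convex_le γ)) ?_
    · intro z hz
      obtain ⟨k, h1, h2, rfl, h3⟩ := hB' z hz
      simp only [Set.mem_ofPred_eq, Complex.natCast_im, Complex.natCast_re, true_and]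
      by_contra hcon
      have hcon : k ≤ γ := by exact_mod_cast not_lt.1 hcon
      have hγ : γ ∈ insert n D := by
        obtain ⟨z, hz⟩ := hCn
        rcases hC' z hz with rfl | ⟨l, h4, h5, rfl, h6⟩
        · have h7 := ((hC _).1 hz).2
          rw [lab_I] at h7
          subst h7
          rcases Finset.mem_insert.1 hm with h8 | h8
          · omega
          · exact h8
        · exact h6 ▸ (en_spec D h5).1
      have := en_le hγ hcon
      omega
    · intro z hz
      rcases hC' z hz with rfl | ⟨k, h1, h2, rfl, h3⟩
      · simp
      · right
        have := (en_spec D h2).2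
        simp only [Complex.natCast_im, Complex.natCast_re, true_and]
        exact_mod_cast h3 ▸ this
    · rw [Set.disjoint_left]
      rintro z ⟨h1, h2⟩ (h3 | ⟨h3, h4⟩)
      · exact h3.ne' h1
      · exact absurd h2 (not_lt.2 h4)


lemma part_nc {n : ℕ} {D : Finset ℕ} {m : ℕ} (hm : m ∈ insert 0 (insert n D)) :
    IsNoncrossing (part n D m) := by
  intro B hB C hC hBC
  have hBn := (part n D m).nonempty_of_mem_parts hB
  have hCn := (part n D m).nonempty_of_mem_parts hC
  obtain ⟨β, hβ⟩ := mem_parts hB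
  obtain ⟨γ, hγ⟩ := mem_parts hC
  have hne : β ≠ γ := by
    rintro rfl
    exact hBC (Finset.ext fun z => (hβ z).trans (hγ z).symm)
  by_cases h : β = m
  · exact (disj_aux hm hγ hβ hCn hBn hne.symm (h ▸ hne.symm)).symm
  · exact disj_aux hm hβ hγ hBn hCn hne h

lemma finpartition_ext {s : Finset ℂ} {P Q : Finpartition s}
    (h : ∀ a ∈ s, ∀ b ∈ s, b ∈ P.part a ↔ b ∈ Q.part a) : P = Q := by
  have h' : ∀ a ∈ s, P.part a = Q.part a := by
    intro a ha
    ext b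
    by_cases hb : b ∈ s
    · exact h a ha b hb
    · exact ⟨fun hh => absurd (P.part_subset a hh) hb, fun hh => absurd (Q.part_subset a hh) hb⟩
  apply Finpartition.ext
  ext B
  constructor
  · intro hB
    obtain ⟨a, ha⟩ := P.nonempty_of_mem_parts hB
    have has := P.le hB ha
    rw [← P.part_eq_of_mem hB ha, h' a has]
    exact Q.part_mem.2 has
  · intro hB
    obtain ⟨a, ha⟩ := Q.nonempty_of_mem_parts hB
    have has := Q.le hB ha
    rw [← Q.part_eq_of_mem hB ha, ← h' a has]
    exact P.part_mem.2 has

lemma part_inj {n : ℕ} {D D' : Finset ℕ} {m m' : ℕ}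
    (hD : D ⊆ Finset.Icc 1 (n - 1)) (hD' : D' ⊆ Finset.Icc 1 (n - 1))
    (hm : m ∈ insert 0 (insert n D)) (hm' : m' ∈ insert 0 (insert n D'))
    (h : part n D m = part n D' m') : D = D' ∧ m = m' := by
  have key : ∀ a ∈ Tconfig n, ∀ b ∈ Tconfig n,
      (lab n D m a = lab n D m b ↔ lab n D' m' a = lab n D' m' b) := by
    intro a ha b hb
    rw [← mem_part ha hb, ← mem_part ha hb, h]
  have hDD : D = D' := by
    ext k
    by_cases hk : k ∈ Finset.Icc 1 (n - 1)
    · rw [Finset.mem_Icc] at hk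
      have h1 : k < n := by omega
      have := key k (cast_mem_T hk.1 h1.le) ((k + 1 : ℕ) : ℂ) (cast_mem_T (by omega) h1)
      rw [lab_cast, lab_cast, lab_cast, lab_cast, en_succ h1, en_succ h1] at this
      exact not_iff_not.1 this
    · exact ⟨fun hh => absurd (hD hh) hk, fun hh => absurd (hD' hh) hk⟩
  subst hDD
  refine ⟨rfl, ?_⟩
  have hb : ∀ j, j ∈ insert 0 (insert n D) → j ≠ 0 → j ∈ insert n D ∧ 1 ≤ j ∧ j ≤ n := by
    intro j hj hj0
    have h1 := (Finset.mem_insert.1 hj).resolve_left hj0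
    refine ⟨h1, by omega, ?_⟩
    rcases Finset.mem_insert.1 h1 with h2 | h2
    · omega
    · have := Finset.mem_Icc.1 (hD h2)
      omega
  by_cases h0 : m = 0
  · by_cases h0' : m' = 0
    · omega
    · obtain ⟨h1, h2, h3⟩ := hb m' hm' h0'
      have := (key _ (cast_mem_T h2 h3) _ (I_mem_T n)).2 (by simp [en_self h1 h3])
      simpa [en_self h1 h3] using this.symm
  · obtain ⟨h1, h2, h3⟩ := hb m hm h0
    have := (key _ (cast_mem_T h2 h3) _ (I_mem_T n)).1 (by simp [en_self h1 h3])
    simpa [en_self h1 h3] using this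

lemma nc_convex {n : ℕ} {P : Finpartition (Tconfig n)} (hP : IsNoncrossing P) {a b c : ℕ}
    (ha : 1 ≤ a) (hab : a ≤ b) (hbc : b ≤ c) (hc : c ≤ n) (h : P.part (a : ℂ) = P.part (c : ℂ)) :
    P.part (a : ℂ) = P.part (b : ℂ) := by
  by_contra hne
  have haT : (a : ℂ) ∈ Tconfig n := cast_mem_T ha (by omega)
  have hbT : (b : ℂ) ∈ Tconfig n := cast_mem_T (by omega) (by omega)
  have hcT : (c : ℂ) ∈ Tconfig n := cast_mem_T (by omega) hc
  have hd := hP (P.part_mem.2 haT) (P.part_mem.2 hbT) hne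
  have hd' := Set.disjoint_left.1 hd
  refine @hd' (b : ℂ) ?_ (subset_convexHull ℝ _ (P.mem_part hbT))
  have h1 : (a : ℂ) ∈ convexHull ℝ ((P.part (a : ℂ) : Finset ℂ) : Set ℂ) :=
    subset_convexHull ℝ _ (P.mem_part haT)
  have h2 : (c : ℂ) ∈ convexHull ℝ ((P.part (a : ℂ) : Finset ℂ) : Set ℂ) :=
    subset_convexHull ℝ _ (by rw [h]; exact P.mem_part hcT)
  rcases hab.eq_or_lt with rfl | hab
  · exact h1
  have hac : (0 : ℝ) < (c : ℝ) - a := by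
    have : (a : ℝ) < c := by exact_mod_cast lt_of_lt_of_le hab hbc
    linarith
  have hbc' : (b : ℝ) ≤ c := by exact_mod_cast hbc
  have hab' : (a : ℝ) ≤ b := by exact_mod_cast hab.le
  have := (convex_convexHull ℝ ((P.part (a : ℂ) : Finset ℂ) : Set ℂ)) h1 h2
    (a := ((c : ℝ) - b) / (c - a)) (b := ((b : ℝ) - a) / (c - a))
    (div_nonneg (by linarith) hac.le) (div_nonneg (by linarith) hac.le)
    (by field_simp; ring)
  convert this using 1
  apply Complex.ext
  · simp only [Complex.add_re, Complex.smul_re, Complex.natCast_re, smul_eq_mul]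
    field_simp
    ring
  · simp only [Complex.add_im, Complex.smul_im, Complex.natCast_im, smul_zero, add_zero]

lemma part_surj {n : ℕ} (hn : 2 ≤ n) {P : Finpartition (Tconfig n)} (hP : IsNoncrossing P) :
    ∃ D m, D ⊆ Finset.Icc 1 (n - 1) ∧ m ∈ insert 0 (insert n D) ∧ part n D m = P := by
  classical
  set D := (Finset.Icc 1 (n - 1)).filter
    (fun k : ℕ => P.part (k : ℂ) ≠ P.part ((k + 1 : ℕ) : ℂ)) with hDdef
  set Y := (Finset.Icc 1 n).filter (fun k : ℕ => P.part (k : ℂ) = P.part Complex.I) with hY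
  set m := Y.sup id with hmdef
  have memY : ∀ k, k ∈ Y ↔ (1 ≤ k ∧ k ≤ n) ∧ P.part (k : ℂ) = P.part Complex.I := by
    intro k
    rw [hY, Finset.mem_filter, Finset.mem_Icc]
  have memD : ∀ k, k ∈ D ↔ (1 ≤ k ∧ k ≤ n - 1) ∧ P.part (k : ℂ) ≠ P.part ((k + 1 : ℕ) : ℂ) := by
    intro k
    rw [hDdef, Finset.mem_filter, Finset.mem_Icc]
  have leY : ∀ k ∈ Y, k ≤ m := fun k hk => Finset.le_sup (f := id) hk
  have mY : m ≠ 0 → m ∈ Y := by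
    intro h0
    have hne : Y.Nonempty := by
      rw [Finset.nonempty_iff_ne_empty]
      intro he
      apply h0
      rw [hmdef, he]
      rfl
    obtain ⟨k, hk, hk'⟩ := Finset.exists_mem_eq_sup Y hne id
    rw [hmdef, hk']
    exact hk
  have hm : m ≠ 0 → m ∈ insert n D := by
    intro h0
    obtain ⟨⟨h1, h2⟩, h3⟩ := (memY m).1 (mY h0)
    by_cases h4 : m = n
    · rw [h4]; exact Finset.mem_insert_self _ _
    · apply Finset.mem_insert_of_mem
      refine (memD m).2 ⟨⟨h1, by omega⟩, fun h5 => ?_⟩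
      have := leY (m + 1) ((memY _).2 ⟨⟨by omega, by omega⟩, h5 ▸ h3⟩)
      omega
  have keyA : ∀ d k, 1 ≤ k → k ≤ n → n - k = d →
      P.part (k : ℂ) = P.part ((en n D k : ℕ) : ℂ) := by
    intro d
    induction d with
    | zero =>
      intro k h1 h2 h3
      have : k = n := by omega
      subst this
      rw [en_self (Finset.mem_insert_self _ _) le_rfl]
    | succ d ih =>
      intro k h1 h2 h3
      by_cases hk : k ∈ D
      · rw [en_self (Finset.mem_insert_of_mem hk) h2]
      · rw [(en_succ (by omega)).2 hk, ← ih (k + 1) (by omega) (by omega) (by omega)]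
        by_contra hne
        exact hk ((memD k).2 ⟨⟨h1, by omega⟩, hne⟩)
  have keyB : ∀ k d, 1 ≤ k → k + d ≤ n → P.part (k : ℂ) = P.part ((k + d : ℕ) : ℂ) →
      en n D k = en n D (k + d) := by
    intro k d
    induction d with
    | zero => intros; rfl
    | succ d ih =>
      intro h1 h2 h3
      have h4 := nc_convex hP h1 (show k ≤ k + d by omega) (show k + d ≤ k + (d + 1) by omega) h2 h3
      rw [ih h1 (by omega) h4, ← add_assoc, en_succ (by omega)]
      intro h5
      exact ((memD _).1 h5).2 (h4.symm.trans h3)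
  have keyC : ∀ k l, 1 ≤ k → k ≤ n → 1 ≤ l → l ≤ n →
      (P.part (k : ℂ) = P.part (l : ℂ) ↔ en n D k = en n D l) := by
    intro k l hk hk' hl hl'
    constructor
    · intro h
      rcases le_total k l with hkl | hkl
      · obtain ⟨d, rfl⟩ := Nat.exists_eq_add_of_le hkl
        exact keyB k d hk hl' h
      · obtain ⟨d, rfl⟩ := Nat.exists_eq_add_of_le hkl
        exact (keyB l d hl hk' h.symm).symm
    · intro h
      rw [keyA _ k hk hk' rfl, keyA _ l hl hl' rfl, h]
  have keyI : ∀ k, 1 ≤ k → k ≤ n → (P.part (k : ℂ) = P.part Complex.I ↔ en n D k = m) := by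
    intro k hk hk'
    constructor
    · intro h
      have h1 := leY k ((memY k).2 ⟨⟨hk, hk'⟩, h⟩)
      have h0 : m ≠ 0 := by omega
      obtain ⟨⟨h2, h3⟩, h4⟩ := (memY m).1 (mY h0)
      rw [(keyC k m hk hk' h2 h3).1 (h.trans h4.symm), en_self (hm h0) h3]
    · intro h
      have h1 := (en_spec D hk').2
      have h0 : m ≠ 0 := by omega
      rw [keyA _ k hk hk' rfl, h]
      exact ((memY m).1 (mY h0)).2
  refine ⟨D, m, Finset.filter_subset _ _, ?_, ?_⟩
  · by_cases h0 : m = 0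
    · rw [h0]; exact Finset.mem_insert_self _ _
    · exact Finset.mem_insert_of_mem (hm h0)
  · apply finpartition_ext
    intro a ha b hb
    rw [mem_part ha hb, P.mem_part_iff_part_eq_part hb ha]
    rcases mem_T.1 ha with rfl | ⟨k, h1, h2, rfl⟩ <;>
    rcases mem_T.1 hb with rfl | ⟨l, h3, h4, rfl⟩
    · simp
    · rw [lab_I, lab_cast, keyI l h3 h4, eq_comm]
    · rw [lab_I, lab_cast, ← keyI k h1 h2, eq_comm]
    · rw [lab_cast, lab_cast, ← keyC k l h1 h2 h3 h4, eq_comm]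

end NCT

/-- For `n ≥ 2`, `t_n = (n + 3) * 2 ^ (n - 2)` where `t_n = |NC(T_n)|`. -/
theorem nc_T_card_closed_form (n : ℕ) (hn : 2 ≤ n) :
    Nat.card (NC (Tconfig n)) = (n + 3) * 2 ^ (n - 2) := by
  have hmem : ∀ c : NCT.codes n, c.1.1 ⊆ Finset.Icc 1 (n - 1) ∧
      c.1.2 ∈ insert 0 (insert n c.1.1) := by
    intro c
    have := Finset.mem_sigma.1 c.2
    exact ⟨Finset.mem_powerset.1 this.1, this.2⟩
  let F : NCT.codes n → NC (Tconfig n) := fun c =>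
    ⟨NCT.part n c.1.1 c.1.2, NCT.part_nc (hmem c).2⟩
  have hF : Function.Bijective F := by
    constructor
    · rintro c c' h
      have h1 := congrArg Subtype.val h
      obtain ⟨h2, h3⟩ := NCT.part_inj (hmem c).1 (hmem c').1 (hmem c).2 (hmem c').2 h1
      apply Subtype.ext
      exact Sigma.ext h2 (heq_of_eq h3)
    · rintro ⟨P, hP⟩
      obtain ⟨D, m, h1, h2, h3⟩ := NCT.part_surj hn hP
      exact ⟨⟨⟨D, m⟩, Finset.mem_sigma.2 ⟨Finset.mem_powerset.2 h1, h2⟩⟩, Subtype.ext h3⟩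
  rw [← Nat.card_congr (Equiv.ofBijective F hF), ← NCT.card_codes n hn]
  simp
end
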